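/- arXiv:1712.04916 — 2 statements merged into one kernel-verified Lean document; each statement's English description precedes it below -/
import Mathlib

section
/- Let n ≥ 1 and let s ∈ ℂⁿ have pairwise distinct entries with Re(s_j − s_{j+1}) ≥ 2 for all j = 1,…,n−1. Then f_n(s, D(1)) = (∏_{j=0}^{n−1} (2j)!/j!) / ∏_{1≤k<l≤n} 2·(s_k − s_l − 1). -/
/-!
Write `[[0, v], [-v, M]]` for the skew bordering of `M` by `v`. The integral takes the same value
at all orthogonal complex structures `X` (`Xᵀ = -X`, `X Xᵀ = 1`), and it is computed by induction on
`n` in this generality. By invariance of Haar measure we may average the integrand over the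
conjugations by `diag(1, g)` with `g ∈ O(2n-1)`, one of which brings `X` to the double bordering
`[[0, e₁], [-e₁, diag(0, Y)]]`. Conjugating the latter by `diag(1, g)` gives the bordering of
`g diag(0, Y) gᵀ` by the first column `x` of `g`. Clearing the entries of `x` below `x₀` by a
unipotent lower triangular shear, which preserves leading minors, and taking an LQ factorization of
what remains of `g`, one finds that the leading minor of size `2j + 2` is

  `(x₀² + ⋯ + x_{2j}²) · det (k Y kᵀ)_{[2j]}`

with `k ∈ O(2n-2)` depending on `g` only. Averaging also over `g ↦ g diag(1, t)`, `t ∈ O(2n-2)`,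
which does not change `x`, absorbs `k`. The integral for `n` is therefore the integral for `n - 1`
times the average over the sphere `S^{2n-2}` of a product of powers of partial norms of `x`.

The sphere average of a homogeneous function is its Gaussian integral divided by a Gamma factor, and
the Gaussian integral of a function that ignores two coordinates splits off a factor `π`. Dropping
the last two coordinates therefore changes the sphere average by a ratio of Gamma functions, which
is rational because two coordinates shift the argument by exactly `1`. The exponents telescope, so
the product of these ratios is `(2n-2)! / (n-1)!` over the row `∏_l 2 (s_1 - s_l - 1)` of the
product over pairs.
-/

open MeasureTheory Matrix
open scoped BigOperators

noncomputable section

instance matrixMeasurableSpace {l : Type*} [Fintype l] : MeasurableSpace (Matrix l l ℝ) :=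
  inferInstanceAs (MeasurableSpace (l → l → ℝ))

/-- The orthogonal group `O(m)` as a subtype of `m × m` real matrices. -/
abbrev OG (m : ℕ) := Matrix.orthogonalGroup (Fin m) ℝ

/-- `t ^ w` for a real `t ≥ 0` and complex `w`, with the convention `0 ^ w = 0`. -/
def cpw (t : ℝ) (w : ℂ) : ℂ := if t = 0 then 0 else Complex.exp (w * Real.log t)

/-- The `2n × 2n` real antisymmetric matrix `D(a) = diag(a₁ J, …, aₙ J)`,
`J = [[0,1],[-1,0]]`. -/
def Dmat {n : ℕ} (a : Fin n → ℝ) : Matrix (Fin (2 * n)) (Fin (2 * n)) ℝ :=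
  Matrix.of fun i j =>
    if i.val / 2 = j.val / 2 then
      a ⟨i.val / 2, by have := i.isLt; omega⟩ *
        (if i.val % 2 = 0 ∧ j.val % 2 = 1 then 1
          else if i.val % 2 = 1 ∧ j.val % 2 = 0 then -1 else 0)
    else 0

/-- Vandermonde product `Δ_m(x) = ∏_{j<k} (x_k - x_j)`. -/
def vdm {m : ℕ} {R : Type*} [CommRing R] (x : Fin m → R) : R :=
  ∏ p ∈ Finset.univ.filter (fun p : Fin m × Fin m => p.1 < p.2), (x p.2 - x p.1)

/-- `s_{n+1} := -n-1` convention: the `j`-th exponent `(s_j - s_{j+1})/2 - 1`. -/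
def expo (n : ℕ) (s : Fin n → ℂ) (j : Fin n) : ℂ :=
  (s j - (if h : j.val + 1 < n then s ⟨j.val + 1, h⟩ else -(n : ℂ) - 1)) / 2 - 1

/-- The spherical-type group integral
`f_n(s,X) = ∫_{O(2n)} ∏_j det((kXkᵀ)_{[2j]})^{(s_j-s_{j+1})/2-1} d*k`. -/
def sphInt (n : ℕ) (μ : Measure (OG (2 * n))) (s : Fin n → ℂ)
    (X : Matrix (Fin (2 * n)) (Fin (2 * n)) ℝ) : ℂ :=
  ∫ k : OG (2 * n), ∏ j : Fin n,
    cpw ((((k : Matrix (Fin (2 * n)) (Fin (2 * n)) ℝ) * X *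
        (k : Matrix (Fin (2 * n)) (Fin (2 * n)) ℝ)ᵀ).submatrix
          (Fin.castLE (by have := j.isLt; omega : 2 * (j.val + 1) ≤ 2 * n))
          (Fin.castLE (by have := j.isLt; omega : 2 * (j.val + 1) ≤ 2 * n))).det)
      (expo n s j) ∂μ

section Border

variable {R : Type*} {m r : ℕ}

/-- The block matrix with entry `a` in the corner, first row `(a, u)`, first column `(a, v)` and
remaining block `M`, used to peel off one row and one column at a time. -/
def border (a : R) (u v : Fin m → R) (M : Matrix (Fin m) (Fin m) R) :
    Matrix (Fin (m + 1)) (Fin (m + 1)) R :=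
  of (Fin.cons (Fin.cons a u) fun i => Fin.cons (v i) (M i))

section Entries

variable (a : R) (u v : Fin m → R) (M : Matrix (Fin m) (Fin m) R)

@[simp] theorem border_zero_zero : border a u v M 0 0 = a := rfl

@[simp] theorem border_zero_succ (j : Fin m) : border a u v M 0 j.succ = u j := rfl

@[simp] theorem border_succ_zero (i : Fin m) : border a u v M i.succ 0 = v i := rfl

@[simp] theorem border_succ_succ (i j : Fin m) : border a u v M i.succ j.succ = M i j := rfl

theorem border_transpose : (border a u v M)ᵀ = border a v u Mᵀ := by
  ext i j
  cases i using Fin.cases <;> cases j using Fin.cases <;> rfl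

end Entries

theorem exists_eq_border (A : Matrix (Fin (m + 1)) (Fin (m + 1)) R) :
    ∃ a u v M, A = border a u v M := by
  refine ⟨A 0 0, fun j => A 0 j.succ, fun i => A i.succ 0, A.submatrix Fin.succ Fin.succ, ?_⟩
  ext i j
  cases i using Fin.cases <;> cases j using Fin.cases <;> rfl

theorem border_inj {a b : R} {u v x y : Fin m → R} {M N : Matrix (Fin m) (Fin m) R} :
    border a u v M = border b x y N ↔ a = b ∧ u = x ∧ v = y ∧ M = N := by
  refine ⟨fun h => ⟨congrFun₂ h 0 0, funext fun j => congrFun₂ h 0 j.succ,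
    funext fun i => congrFun₂ h i.succ 0, ext fun i j => congrFun₂ h i.succ j.succ⟩, ?_⟩
  rintro ⟨rfl, rfl, rfl, rfl⟩
  rfl

variable [CommRing R]

theorem border_neg (a : R) (u v : Fin m → R) (M : Matrix (Fin m) (Fin m) R) :
    -border a u v M = border (-a) (-u) (-v) (-M) := by
  ext i j
  cases i using Fin.cases <;> cases j using Fin.cases <;> rfl

theorem border_one : border 1 0 0 (1 : Matrix (Fin m) (Fin m) R) = 1 := by
  ext i j
  cases i using Fin.cases <;> cases j using Fin.cases <;> simp [one_apply, Fin.succ_ne_zero,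
    (Fin.succ_ne_zero _).symm]

theorem border_mul (a b : R) (u v x y : Fin m → R) (M N : Matrix (Fin m) (Fin m) R) :
    border a u v M * border b x y N =
      border (a * b + u ⬝ᵥ y) (a • x + u ᵥ* N) (b • v + M *ᵥ y) (vecMulVec v x + M * N) := by
  ext i j
  cases i using Fin.cases <;> cases j using Fin.cases <;>
    simp [mul_apply, Fin.sum_univ_succ, dotProduct, vecMul, mulVec, vecMulVec_apply, mul_comm]

theorem det_border_zero_col (a : R) (u : Fin m → R) (M : Matrix (Fin m) (Fin m) R) :
    (border a u 0 M).det = a * M.det := by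
  have hM : (border a u 0 M).submatrix Fin.succ Fin.succ = M := rfl
  simp [det_succ_column_zero, Fin.sum_univ_succ, hM]

theorem det_border_single (a b : R) (x y : Fin m → R) (M : Matrix (Fin m) (Fin m) R) :
    (border 0 (Fin.cons a 0) (-Fin.cons a 0) (border b x y M)).det = a ^ 2 * M.det := by
  have hminor : (border 0 (Fin.cons a 0) (-Fin.cons a 0) (border b x y M)).submatrix
      Fin.succ (Fin.succAbove 1) = border (-a) x 0 M := by
    ext i j
    cases i using Fin.cases <;> cases j using Fin.cases
    case succ.zero => exact neg_zero
    all_goals rfl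
  have hentry : border 0 (Fin.cons a 0) (-Fin.cons a 0) (border b x y M) 0 1 = a := rfl
  rw [det_succ_row_zero, Fin.sum_univ_succ, Fin.sum_univ_succ]
  simp [hminor, hentry, det_border_zero_col]
  ring

/-- The skew bordering `[[0, v], [-v, M]]` of a matrix `M`. -/
def skewBorder (v : Fin m → R) (M : Matrix (Fin m) (Fin m) R) :
    Matrix (Fin (m + 1)) (Fin (m + 1)) R :=
  border 0 v (-v) M

theorem border_conj_skewBorder (A M : Matrix (Fin m) (Fin m) R) (v : Fin m → R) :
    border 1 0 0 A * skewBorder v M * (border 1 0 0 A)ᵀ =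
      skewBorder (A *ᵥ v) (A * M * Aᵀ) := by
  simp [skewBorder, border_transpose, border_mul, mulVec_neg, vecMul_transpose]

theorem skewBorder_mul_transpose (v : Fin m → R) (M : Matrix (Fin m) (Fin m) R) :
    skewBorder v M * (skewBorder v M)ᵀ =
      border (v ⬝ᵥ v) (M *ᵥ v) (M *ᵥ v) (vecMulVec v v + M * Mᵀ) := by
  simp [skewBorder, border_transpose, border_mul, vecMul_transpose]

theorem shear_mul_border (a : R) (u p : Fin m → R) (H : Matrix (Fin m) (Fin m) R) :
    border 1 0 (-u) 1 * border a p (a • u) H = border a p 0 (H - vecMulVec u p) := by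
  rw [border_mul, border_inj]
  simp [sub_eq_neg_add]

theorem sub_vecMulVec_mul_transpose_of_border_mul_transpose_eq_one {a : R} {u p : Fin m → R}
    {H : Matrix (Fin m) (Fin m) R}
    (h : border a p (a • u) H * (border a p (a • u) H)ᵀ = 1) :
    (H - vecMulVec u p) * (H - vecMulVec u p)ᵀ = 1 + vecMulVec u u := by
  have hgram : border a p 0 (H - vecMulVec u p) * (border a p 0 (H - vecMulVec u p))ᵀ =
      border 1 0 (-u) 1 * (border 1 0 (-u) 1)ᵀ := by
    rw [← shear_mul_border, transpose_mul, Matrix.mul_assoc, ← Matrix.mul_assoc (border a _ _ _),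
      h, Matrix.one_mul]
  simp only [border_transpose, border_mul, border_inj] at hgram
  simpa [add_comm (vecMulVec u u)] using hgram.2.2.2

end Border

section LeadingBlock

variable {R : Type*} {m r : ℕ}

/-- The upper left `r × r` block, written `X_{[r]}` in the paper. -/
def leadingBlock (h : r ≤ m) (X : Matrix (Fin m) (Fin m) R) : Matrix (Fin r) (Fin r) R :=
  X.submatrix (Fin.castLE h) (Fin.castLE h)

theorem leadingBlock_border (h : r ≤ m) (a : R) (u v : Fin m → R) (M : Matrix (Fin m) (Fin m) R) :
    leadingBlock (Nat.succ_le_succ h) (border a u v M) =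
      border a (u ∘ Fin.castLE h) (v ∘ Fin.castLE h) (leadingBlock h M) := by
  ext i j
  cases i using Fin.cases <;> cases j using Fin.cases <;> rfl

variable [CommRing R]

theorem isLowerTriangular_one : (1 : Matrix (Fin m) (Fin m) R).IsLowerTriangular :=
  blockTriangular_one

theorem isLowerTriangular_border_zero {a : R} {v : Fin m → R} {M : Matrix (Fin m) (Fin m) R}
    (hM : M.IsLowerTriangular) : (border a 0 v M).IsLowerTriangular := by
  intro i j hij
  cases i using Fin.cases <;> cases j using Fin.cases
  case zero.zero => exact absurd hij (lt_irrefl _)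
  case zero.succ => rfl
  case succ.zero i => exact absurd hij (not_lt_of_ge (Fin.zero_le _))
  case succ.succ i j => exact hM (Fin.succ_lt_succ_iff.mp hij)

theorem leadingBlock_mul_of_isLowerTriangular (h : r ≤ m) {T : Matrix (Fin m) (Fin m) R}
    (hT : T.IsLowerTriangular) (Y : Matrix (Fin m) (Fin m) R) :
    leadingBlock h (T * Y) = leadingBlock h T * leadingBlock h Y := by
  ext i j
  obtain ⟨l, rfl⟩ := Nat.exists_eq_add_of_le h
  have htail (p : Fin l) : T (Fin.castLE h i) (Fin.natAdd r p) = 0 :=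
    hT (show (Fin.castLE h i : Fin (r + l)) < Fin.natAdd r p from
      Fin.lt_def.mpr (i.isLt.trans_le (Nat.le_add_right r p)))
  simp only [leadingBlock, mul_apply, submatrix_apply, Fin.sum_univ_add, htail, zero_mul,
    Finset.sum_const_zero, add_zero]
  rfl

theorem leadingBlock_conj_of_isLowerTriangular (h : r ≤ m) {T : Matrix (Fin m) (Fin m) R}
    (hT : T.IsLowerTriangular) (Y : Matrix (Fin m) (Fin m) R) :
    leadingBlock h (T * Y * Tᵀ) = leadingBlock h T * leadingBlock h Y * (leadingBlock h T)ᵀ := by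
  rw [Matrix.mul_assoc, leadingBlock_mul_of_isLowerTriangular h hT, Matrix.mul_assoc]
  congr 1
  have htranspose := congrArg transpose (leadingBlock_mul_of_isLowerTriangular h hT Yᵀ)
  simpa only [leadingBlock, transpose_mul, transpose_submatrix, transpose_transpose]
    using htranspose

theorem det_leadingBlock_of_isLowerTriangular (h : r ≤ m) {T : Matrix (Fin m) (Fin m) R}
    (hT : T.IsLowerTriangular) :
    (leadingBlock h T).det = ∏ i : Fin r, T (Fin.castLE h i) (Fin.castLE h i) :=
  det_of_isLowerTriangular _ fun _ _ hij => hT hij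

theorem det_leadingBlock_conj_of_isLowerTriangular (h : r ≤ m) {T : Matrix (Fin m) (Fin m) R}
    (hT : T.IsLowerTriangular) (Y : Matrix (Fin m) (Fin m) R) :
    (leadingBlock h (T * Y * Tᵀ)).det = (leadingBlock h T).det ^ 2 * (leadingBlock h Y).det := by
  simp only [leadingBlock_conj_of_isLowerTriangular h hT, det_mul, det_transpose]
  ring

theorem det_leadingBlock_skewBorder_single (h : r ≤ m) (a b : R) (x y : Fin m → R)
    (M : Matrix (Fin m) (Fin m) R) :
    (leadingBlock (Nat.add_le_add_right h 2) (skewBorder (Fin.cons a 0) (border b x y M))).det =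
      a ^ 2 * (leadingBlock h M).det := by
  have hcons : (Fin.cons a 0 : Fin (m + 1) → R) ∘ Fin.castLE (Nat.succ_le_succ h) =
      Fin.cons a 0 := by
    ext i
    cases i using Fin.cases <;> rfl
  rw [skewBorder, leadingBlock_border (Nat.succ_le_succ h), leadingBlock_border h, Pi.neg_comp,
    hcons, det_border_single]

theorem det_leadingBlock_skewBorder_conj (h : r ≤ m) (a : R) (u p : Fin m → R)
    (H X : Matrix (Fin m) (Fin m) R) :
    (leadingBlock (Nat.add_le_add_right h 2) (skewBorder ((border a p (a • u) H).col 0)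
        (border a p (a • u) H * skewBorder 0 X * (border a p (a • u) H)ᵀ))).det =
      a ^ 2 * (leadingBlock h ((H - vecMulVec u p) * X * (H - vecMulVec u p)ᵀ)).det := by
  set A := border a p (a • u) H
  let Λ : Matrix (Fin (m + 1)) (Fin (m + 1)) R := border 1 0 (-u) 1
  have hT : (border 1 0 0 Λ).IsLowerTriangular :=
    isLowerTriangular_border_zero (isLowerTriangular_border_zero isLowerTriangular_one)
  have hdet : (leadingBlock (Nat.add_le_add_right h 2) (border 1 0 0 Λ)).det = 1 := by
    rw [det_leadingBlock_of_isLowerTriangular _ hT]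
    refine Finset.prod_eq_one fun i _ => ?_
    cases i using Fin.cases with
    | zero => rfl
    | succ i =>
      cases i using Fin.cases with
      | zero => rfl
      | succ i => exact one_apply_eq _
  have hΛ : Λ * A = border a p 0 (H - vecMulVec u p) := shear_mul_border a u p H
  have hcol : Λ *ᵥ A.col 0 = Fin.cons a 0 := by
    rw [← mulVec_single_one, mulVec_mulVec, hΛ, mulVec_single_one]
    ext i
    cases i using Fin.cases <;> rfl
  have hconj : Λ * (A * skewBorder 0 X * Aᵀ) * Λᵀ = (Λ * A) * skewBorder 0 X * (Λ * A)ᵀ := by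
    simp only [transpose_mul, Matrix.mul_assoc]
  have hshear := det_leadingBlock_conj_of_isLowerTriangular (Nat.add_le_add_right h 2) hT
    (skewBorder (A.col 0) (A * skewBorder 0 X * Aᵀ))
  rw [border_conj_skewBorder, hdet, one_pow, one_mul, hcol, hconj, hΛ] at hshear
  rw [← hshear, border_transpose, skewBorder.eq_def (0 : Fin m → R), border_mul, border_mul,
    det_leadingBlock_skewBorder_single h]
  simp

theorem det_leadingBlock_one_add_vecMulVec (h : r ≤ m) (u : Fin m → R) :
    (leadingBlock h (1 + vecMulVec u u)).det = 1 + ∑ i : Fin r, u (Fin.castLE h i) ^ 2 := by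
  have hblock : leadingBlock h (1 + vecMulVec u u) =
      1 + vecMulVec (u ∘ Fin.castLE h) (u ∘ Fin.castLE h) := by
    ext i j
    simp [leadingBlock, one_apply, vecMulVec_apply]
  rw [hblock, vecMulVec_eq Unit, det_one_add_replicateCol_mul_replicateRow]
  simp [dotProduct, pow_two]

end LeadingBlock

section RealLinearAlgebra

open Module

theorem exists_eq_lowerTriangular_mul_orthogonal {m : ℕ} (B : Matrix (Fin m) (Fin m) ℝ) :
    ∃ L : Matrix (Fin m) (Fin m) ℝ, L.IsLowerTriangular ∧ ∃ k : OG m, B = L * k.1 := by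
  let rows : Fin m → EuclideanSpace ℝ (Fin m) := fun i => WithLp.toLp 2 (B i)
  let b := InnerProductSpace.gramSchmidtOrthonormalBasis (𝕜 := ℝ) (by simp) rows
  let e := EuclideanSpace.basisFun (Fin m) ℝ
  have hk : e.toBasis.toMatrix b ∈ OG m := e.toMatrix_orthonormalBasis_mem_unitary b
  refine ⟨(b.toBasis.toMatrix rows)ᵀ, ?_, star ⟨_, hk⟩, ?_⟩
  · exact fun i j hij =>
      InnerProductSpace.gramSchmidtOrthonormalBasis_inv_isUpperTriangular _ rows hij
  · have hbasis := e.toBasis.toMatrix_mul_toMatrix b.toBasis rows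
    rw [OrthonormalBasis.coe_toBasis] at hbasis
    have hrows : (e.toBasis.toMatrix rows)ᵀ = B := by
      ext i j
      simp [e, rows, Basis.toMatrix_apply]
    rw [← hrows, ← hbasis, transpose_mul]
    rfl

theorem exists_det_leadingBlock_conj_eq {m : ℕ} (B : Matrix (Fin m) (Fin m) ℝ) :
    ∃ k : OG m, ∀ (X : Matrix (Fin m) (Fin m) ℝ) {r : ℕ} (h : r ≤ m),
      (leadingBlock h (B * X * Bᵀ)).det =
        (leadingBlock h (B * Bᵀ)).det * (leadingBlock h (k.1 * X * k.1ᵀ)).det := by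
  obtain ⟨L, hL, k, rfl⟩ := exists_eq_lowerTriangular_mul_orthogonal B
  have hk : k.1 * k.1ᵀ = 1 := (mem_orthogonalGroup_iff _ _).mp k.2
  refine ⟨k, fun X r h => ?_⟩
  have hconj : L * k.1 * X * (L * k.1)ᵀ = L * (k.1 * X * k.1ᵀ) * Lᵀ := by
    simp only [transpose_mul, Matrix.mul_assoc]
  have hgram : L * k.1 * (L * k.1)ᵀ = L * Lᵀ := by
    rw [transpose_mul, Matrix.mul_assoc, ← Matrix.mul_assoc k.1, hk, Matrix.one_mul]
  have hone : leadingBlock h (1 : Matrix (Fin m) (Fin m) ℝ) = 1 :=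
    submatrix_one _ (Fin.castLE_injective h)
  have hLL := det_leadingBlock_conj_of_isLowerTriangular h hL 1
  rw [hone, det_one, Matrix.mul_one, mul_one] at hLL
  rw [hconj, hgram, hLL, det_leadingBlock_conj_of_isLowerTriangular h hL]

theorem abs_det_eq_one_of_mul_transpose_eq_one {ι : Type*} [Fintype ι] [DecidableEq ι]
    {A : Matrix ι ι ℝ} (hA : A * Aᵀ = 1) : |A.det| = 1 := by
  rw [← abs_one, ← sq_eq_sq_iff_abs_eq_abs, one_pow, pow_two]
  simpa using congrArg det hA

theorem exists_orthogonal_col_eq {ι : Type*} [Fintype ι] [DecidableEq ι] (i : ι) {v : ι → ℝ}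
    (hv : v ⬝ᵥ v = 1) : ∃ g : orthogonalGroup ι ℝ, g.1.col i = v := by
  let x : ι → EuclideanSpace ℝ ι := fun _ => WithLp.toLp 2 v
  have hnorm : ‖WithLp.toLp 2 v‖ = 1 := by
    rw [EuclideanSpace.norm_eq, Real.sqrt_eq_one]
    simpa [dotProduct, pow_two] using hv
  have hx : Orthonormal ℝ (({i} : Set ι).domRestrict x) := by
    refine ⟨fun _ => hnorm, fun j k hjk => absurd (Subsingleton.elim j k) hjk⟩
  obtain ⟨b, hb⟩ := hx.exists_orthonormalBasis_extension_of_card_eq (by simp)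
  let e := EuclideanSpace.basisFun ι ℝ
  refine ⟨⟨e.toBasis.toMatrix b, e.toMatrix_orthonormalBasis_mem_unitary b⟩, ?_⟩
  ext j
  simp [e, x, hb i rfl, Basis.toMatrix_apply]

end RealLinearAlgebra

section OrthogonalConjugation

section Conjugation

variable {ι : Type*} [Fintype ι] [DecidableEq ι]

/-- The action `X ↦ g X gᵀ` of the orthogonal group on matrices. -/
def orthConj (g : orthogonalGroup ι ℝ) (X : Matrix ι ι ℝ) : Matrix ι ι ℝ :=
  g.1 * X * g.1ᵀ

theorem orthConj_mul (g h : orthogonalGroup ι ℝ) (X : Matrix ι ι ℝ) :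
    orthConj (g * h) X = orthConj g (orthConj h X) := by
  simp only [orthConj, Submonoid.coe_mul, transpose_mul, Matrix.mul_assoc]

/-- Orthogonal complex structures: real matrices with `Xᵀ = -X` and `X Xᵀ = 1`, so that
`X² = -1`. They form the `O(2n)`-conjugation orbit of `D(1)`, and the induction on `n` runs over
all of them. -/
structure IsOrthComplexStructure (X : Matrix ι ι ℝ) : Prop where
  transpose_eq_neg : Xᵀ = -X
  mul_transpose_eq_one : X * Xᵀ = 1

theorem IsOrthComplexStructure.conj {X : Matrix ι ι ℝ} (hX : IsOrthComplexStructure X)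
    (g : orthogonalGroup ι ℝ) : IsOrthComplexStructure (orthConj g X) where
  transpose_eq_neg := by
    simp only [orthConj, transpose_mul, transpose_transpose, hX.transpose_eq_neg,
      Matrix.neg_mul, Matrix.mul_neg, Matrix.mul_assoc]
  mul_transpose_eq_one := by
    have hg : g.1ᵀ * g.1 = 1 := (mem_orthogonalGroup_iff' _ _).mp g.2
    have hg' : g.1 * g.1ᵀ = 1 := (mem_orthogonalGroup_iff _ _).mp g.2
    calc g.1 * X * g.1ᵀ * (g.1 * X * g.1ᵀ)ᵀ = g.1 * X * (g.1ᵀ * g.1) * (Xᵀ * g.1ᵀ) := by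
          simp only [transpose_mul, transpose_transpose, Matrix.mul_assoc]
      _ = g.1 * (X * Xᵀ) * g.1ᵀ := by rw [hg, Matrix.mul_one]; simp only [Matrix.mul_assoc]
      _ = 1 := by rw [hX.mul_transpose_eq_one, Matrix.mul_one, hg']

theorem IsOrthComplexStructure.mem_orthogonalGroup {X : Matrix ι ι ℝ}
    (hX : IsOrthComplexStructure X) : X ∈ orthogonalGroup ι ℝ :=
  (mem_orthogonalGroup_iff _ _).mpr hX.mul_transpose_eq_one

theorem continuous_orthConj (X : Matrix ι ι ℝ) :
    Continuous fun g : orthogonalGroup ι ℝ => orthConj g X := by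
  unfold orthConj
  fun_prop

end Conjugation

variable {m : ℕ}

/-- The embedding `g ↦ diag(1, g)` of `O(m)` in `O(m + 1)`. -/
def blockEmbed : OG m →* OG (m + 1) where
  toFun g := ⟨border 1 0 0 g.1, by
    rw [mem_orthogonalGroup_iff, border_transpose, border_mul]
    have hg : g.1 * g.1ᵀ = 1 := (mem_orthogonalGroup_iff _ _).mp g.2
    simp [hg, border_one]⟩
  map_one' := Subtype.ext border_one
  map_mul' g h := Subtype.ext (by simp [border_mul])

theorem continuous_blockEmbed : Continuous (blockEmbed : OG m → OG (m + 1)) := by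
  refine Continuous.subtype_mk (continuous_matrix fun i j => ?_) _
  cases i using Fin.cases <;> cases j using Fin.cases
  case succ.succ i j => exact (continuous_apply_apply i j).comp continuous_subtype_val
  all_goals exact continuous_const

theorem col_zero_mul_blockEmbed (h : OG (m + 1)) (g : OG m) :
    (h * blockEmbed g).1.col 0 = h.1.col 0 := by
  ext i
  simp [blockEmbed, mul_apply, Fin.sum_univ_succ]

theorem orthConj_blockEmbed_skewBorder (g : OG m) (v : Fin m → ℝ)
    (M : Matrix (Fin m) (Fin m) ℝ) :
    orthConj (blockEmbed g) (skewBorder v M) = skewBorder (g.1 *ᵥ v) (orthConj g M) :=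
  border_conj_skewBorder g.1 M v

theorem exists_eq_skewBorder {X : Matrix (Fin (m + 1)) (Fin (m + 1)) ℝ} (hX : Xᵀ = -X) :
    ∃ v M, X = skewBorder v M := by
  obtain ⟨a, u, v, M, rfl⟩ := exists_eq_border X
  rw [border_transpose, border_neg, border_inj] at hX
  obtain ⟨ha, hvu, -, -⟩ := hX
  exact ⟨u, M, by rw [skewBorder, border_inj]; exact ⟨self_eq_neg.mp ha, rfl, hvu ▸ rfl, rfl⟩⟩

theorem IsOrthComplexStructure.dotProduct_self_eq_one {v : Fin m → ℝ}
    {M : Matrix (Fin m) (Fin m) ℝ} (hX : IsOrthComplexStructure (skewBorder v M)) :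
    v ⬝ᵥ v = 1 := by
  have horth := hX.mul_transpose_eq_one
  rw [skewBorder_mul_transpose, ← border_one, border_inj] at horth
  exact horth.1

theorem IsOrthComplexStructure.exists_eq_skewBorder_zero
    {N : Matrix (Fin (m + 1)) (Fin (m + 1)) ℝ}
    (hN : IsOrthComplexStructure (skewBorder (Pi.single 0 1) N)) :
    ∃ Y, IsOrthComplexStructure Y ∧ N = skewBorder 0 Y := by
  obtain ⟨hskew, horth⟩ := hN
  rw [skewBorder, border_transpose, border_neg, border_inj] at hskew
  rw [skewBorder_mul_transpose, ← border_one, border_inj] at horth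
  obtain ⟨w, Y, rfl⟩ := exists_eq_skewBorder hskew.2.2.2
  obtain rfl : w = 0 := by
    ext i
    simpa [skewBorder] using congrFun horth.2.1 i.succ
  refine ⟨Y, ⟨?_, ?_⟩, rfl⟩
  · ext i j
    exact congrFun₂ hskew.2.2.2 i.succ j.succ
  · ext i j
    simpa [skewBorder_mul_transpose, vecMulVec_apply, one_apply] using
      congrFun₂ horth.2.2.2 i.succ j.succ

theorem IsOrthComplexStructure.exists_conj_blockEmbed_eq
    {X : Matrix (Fin (m + 2)) (Fin (m + 2)) ℝ} (hX : IsOrthComplexStructure X) :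
    ∃ (c : OG (m + 1)) (Y : Matrix (Fin m) (Fin m) ℝ), IsOrthComplexStructure Y ∧
      orthConj (blockEmbed c) X = skewBorder (Pi.single 0 1) (skewBorder 0 Y) := by
  obtain ⟨v, M, rfl⟩ := exists_eq_skewBorder hX.transpose_eq_neg
  obtain ⟨g, hg⟩ := exists_orthogonal_col_eq 0 hX.dotProduct_self_eq_one
  have hgv : g⁻¹.1 *ᵥ v = Pi.single 0 1 := by
    rw [← hg, ← mulVec_single_one, mulVec_mulVec, ← Submonoid.coe_mul, inv_mul_cancel,
      Submonoid.coe_one, one_mulVec]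
  have hconj : orthConj (blockEmbed g⁻¹) (skewBorder v M) =
      skewBorder (Pi.single 0 1) (orthConj g⁻¹ M) := by
    rw [orthConj_blockEmbed_skewBorder, hgv]
  obtain ⟨Y, hY, hM⟩ := (hconj ▸ hX.conj (blockEmbed g⁻¹)).exists_eq_skewBorder_zero
  exact ⟨g⁻¹, Y, hY, by rw [hconj, hM]⟩

/-- The sum of the squares of the first `r` coordinates. -/
def partialNormSq {m : ℕ} (r : ℕ) (x : Fin m → ℝ) : ℝ :=
  ∑ i : Fin m, if i.val < r then x i ^ 2 else 0

theorem partialNormSq_eq_sum_castLE {r : ℕ} (h : r ≤ m) (x : Fin m → ℝ) :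
    partialNormSq r x = ∑ i : Fin r, x (Fin.castLE h i) ^ 2 := by
  obtain ⟨l, rfl⟩ := Nat.exists_eq_add_of_le h
  simp only [partialNormSq, Fin.sum_univ_add, Fin.val_castAdd, Fin.is_lt, if_true, Fin.val_natAdd,
    Nat.not_lt_of_ge (Nat.le_add_right r _), if_false, Finset.sum_const_zero, add_zero]
  rfl

theorem exists_det_leadingBlock_skewBorder_eq (h : OG (m + 1)) (h0 : h.1 0 0 ≠ 0) :
    ∃ k : OG m, ∀ (X : Matrix (Fin m) (Fin m) ℝ) {r : ℕ} (hr : r ≤ m),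
      (leadingBlock (Nat.add_le_add_right hr 2)
          (skewBorder (h.1.col 0) (orthConj h (skewBorder 0 X)))).det =
        partialNormSq (r + 1) (h.1.col 0) * (leadingBlock hr (orthConj k X)).det := by
  obtain ⟨h, hh⟩ := h
  obtain ⟨a, p, q, H, rfl⟩ := exists_eq_border h
  obtain ⟨u, rfl⟩ : ∃ u, q = a • u := ⟨a⁻¹ • q, (smul_inv_smul₀ h0 q).symm⟩
  obtain ⟨k, hk⟩ := exists_det_leadingBlock_conj_eq (H - vecMulVec u p)
  refine ⟨k, fun X r hr => ?_⟩
  have hA := (mem_orthogonalGroup_iff _ _).mp hh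
  have hnorm : partialNormSq (r + 1) ((border a p (a • u) H).col 0) =
      a ^ 2 * (1 + ∑ i : Fin r, u (Fin.castLE hr i) ^ 2) := by
    rw [partialNormSq_eq_sum_castLE (Nat.succ_le_succ hr)]
    simp [Fin.sum_univ_succ, Finset.mul_sum, mul_add, mul_pow]
  rw [hnorm, orthConj, det_leadingBlock_skewBorder_conj hr, hk,
    sub_vecMulVec_mul_transpose_of_border_mul_transpose_eq_one hA,
    det_leadingBlock_one_add_vecMulVec, ← mul_assoc]
  rfl

end OrthogonalConjugation

section HaarMeasure

instance matrixBorelSpace {ι : Type*} [Fintype ι] : BorelSpace (Matrix ι ι ℝ) :=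
  inferInstanceAs (BorelSpace (ι → ι → ℝ))

instance matrixSecondCountableTopology {ι : Type*} [Finite ι] :
    SecondCountableTopology (Matrix ι ι ℝ) :=
  inferInstanceAs (SecondCountableTopology (ι → ι → ℝ))

variable {ι : Type*} [Fintype ι] [DecidableEq ι]

instance orthogonalGroupSecondCountableTopology :
    SecondCountableTopology (orthogonalGroup ι ℝ) :=
  TopologicalSpace.Subtype.secondCountableTopology (orthogonalGroup ι ℝ : Set (Matrix ι ι ℝ))

theorem isClosed_orthogonalGroup : IsClosed (orthogonalGroup ι ℝ : Set (Matrix ι ι ℝ)) := by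
  have hset : (orthogonalGroup ι ℝ : Set (Matrix ι ι ℝ)) = {A | A * Aᵀ = 1} := by
    ext A
    exact mem_orthogonalGroup_iff _ _
  rw [hset]
  exact isClosed_eq (by fun_prop) continuous_const

instance orthogonalGroupCompactSpace : CompactSpace (orthogonalGroup ι ℝ) := by
  have hcube : IsCompact (Set.univ.pi fun _ : ι => Set.univ.pi fun _ : ι => Set.Icc (-1 : ℝ) 1) :=
    isCompact_univ_pi fun _ => isCompact_univ_pi fun _ => isCompact_Icc
  refine isCompact_iff_compactSpace.mp
    (hcube.of_isClosed_subset isClosed_orthogonalGroup fun A hA i _ j _ => abs_le.mp ?_)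
  exact entry_norm_bound_of_unitary hA i j

theorem isMulRightInvariant_of_isProbabilityMeasure {G : Type*} [Group G] [TopologicalSpace G]
    [IsTopologicalGroup G] [CompactSpace G] [MeasurableSpace G] [BorelSpace G] (μ : Measure G)
    [μ.IsHaarMeasure] [IsProbabilityMeasure μ] : μ.IsMulRightInvariant := by
  refine ⟨fun g => ?_⟩
  have : IsProbabilityMeasure (μ.map (· * g)) :=
    Measure.isProbabilityMeasure_map (measurable_mul_const g).aemeasurable
  exact Measure.isHaarMeasure_eq_of_isProbabilityMeasure _ _

/-- The Haar probability measure on `O(m)`. -/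
def haarOG (m : ℕ) : Measure (OG m) := Measure.haarMeasure ⊤

variable (m : ℕ)

instance haarOG_isHaarMeasure : (haarOG m).IsHaarMeasure :=
  Measure.isHaarMeasure_haarMeasure _

instance haarOG_isProbabilityMeasure : IsProbabilityMeasure (haarOG m) :=
  ⟨Measure.haarMeasure_self (K₀ := ⊤)⟩

instance haarOG_isMulRightInvariant : (haarOG m).IsMulRightInvariant :=
  isMulRightInvariant_of_isProbabilityMeasure _

theorem eq_haarOG (μ : Measure (OG m)) [μ.IsHaarMeasure] [IsProbabilityMeasure μ] :
    μ = haarOG m :=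
  Measure.isHaarMeasure_eq_of_isProbabilityMeasure _ _

end HaarMeasure

section Averaging

variable {T E F : Type*} [MeasurableSpace T] [MeasurableSpace E] [NormedAddCommGroup F]
  {ν : Measure T} [IsProbabilityMeasure ν] {μ : Measure E} [SFinite μ]

theorem integrable_comp_uncurry_of_measurePreserving {φ : T → E → E}
    (hφ : Measurable (Function.uncurry φ)) (hμ : ∀ t, MeasurePreserving (φ t) μ μ) {f : E → F}
    (hf : Integrable f μ) : Integrable (fun p : T × E => f (φ p.1 p.2)) (ν.prod μ) := by
  have hskew : MeasurePreserving (fun p : T × E => (p.1, φ p.1 p.2)) (ν.prod μ) (ν.prod μ) :=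
    (MeasurePreserving.id ν).skew_product hφ (Filter.Eventually.of_forall fun t => (hμ t).map_eq)
  exact hskew.integrable_comp_of_integrable (hf.comp_snd ν)

theorem integral_eq_integral_integral_of_measurePreserving [NormedSpace ℝ F] [CompleteSpace F]
    {φ : T → E → E}
    (hφ : Measurable (Function.uncurry φ)) (hμ : ∀ t, MeasurePreserving (φ t) μ μ) {f : E → F}
    (hf : Integrable f μ) : ∫ x, f x ∂μ = ∫ x, ∫ t, f (φ t x) ∂ν ∂μ := by
  have hfiber (t : T) : ∫ x, f (φ t x) ∂μ = ∫ x, f x ∂μ := by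
    rw [← integral_map (hμ t).aemeasurable ((hμ t).map_eq.symm ▸ hf.aestronglyMeasurable),
      (hμ t).map_eq]
  rw [← integral_integral_swap (integrable_comp_uncurry_of_measurePreserving hφ hμ hf)]
  simp [hfiber]

end Averaging

section ComplexPower

theorem cpw_zero_left (w : ℂ) : cpw 0 w = 0 := if_pos rfl

theorem cpw_one_left (w : ℂ) : cpw 1 w = 1 := by simp [cpw]

theorem cpw_mul (a b : ℝ) (w : ℂ) : cpw (a * b) w = cpw a w * cpw b w := by
  by_cases ha : a = 0
  · simp [cpw, ha]
  by_cases hb : b = 0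
  · simp [cpw, hb]
  simp only [cpw, ha, hb, mul_eq_zero, or_self, if_false, Real.log_mul ha hb, ← Complex.exp_add,
    Complex.ofReal_add, mul_add]

theorem cpw_add (t : ℝ) (w v : ℂ) : cpw t (w + v) = cpw t w * cpw t v := by
  unfold cpw
  split_ifs
  · exact (mul_zero 0).symm
  · rw [add_mul, Complex.exp_add]

theorem cpw_sum {ι : Type*} {s : Finset ι} (hs : s.Nonempty) (t : ℝ) (w : ι → ℂ) :
    cpw t (∑ i ∈ s, w i) = ∏ i ∈ s, cpw t (w i) := by
  induction hs using Finset.Nonempty.cons_induction with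
  | singleton i => simp
  | cons i s hi _ ih => rw [Finset.sum_cons, Finset.prod_cons, cpw_add, ih]

theorem cpw_eq_one_of_abs_eq_one {t : ℝ} (ht : |t| = 1) (w : ℂ) : cpw t w = 1 := by
  rcases eq_or_eq_neg_of_abs_eq ht with rfl | rfl <;> simp [cpw]

theorem cpw_eq_cpow {t : ℝ} (ht : 0 < t) (w : ℂ) : cpw t w = (t : ℂ) ^ w := by
  rw [cpw, if_neg ht.ne', Complex.cpow_def_of_ne_zero (by exact_mod_cast ht.ne'),
    Complex.ofReal_log ht.le, mul_comm]

theorem cpw_exp (u : ℝ) (w : ℂ) : cpw (Real.exp u) w = Complex.exp (w * u) := by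
  simp [cpw, Real.exp_ne_zero]

theorem measurable_cpw (w : ℂ) : Measurable fun t : ℝ => cpw t w := by
  refine Measurable.ite (measurableSet_singleton 0) measurable_const ?_
  exact Complex.measurable_exp.comp
    ((Complex.measurable_ofReal.comp Real.measurable_log).const_mul w)

theorem norm_cpw_le {w : ℂ} (hw : 0 ≤ w.re) {t C : ℝ} (h : |t| ≤ C) : ‖cpw t w‖ ≤ C ^ w.re := by
  by_cases ht : t = 0
  · rw [ht, cpw_zero_left, norm_zero]
    exact Real.rpow_nonneg ((abs_nonneg t).trans h) _
  · calc ‖cpw t w‖ = |t| ^ w.re := by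
          rw [cpw, if_neg ht, Complex.norm_exp, Complex.re_mul_ofReal, ← Real.log_abs,
            mul_comm, ← Real.rpow_def_of_pos (abs_pos.mpr ht)]
      _ ≤ C ^ w.re := Real.rpow_le_rpow (abs_nonneg t) h hw

end ComplexPower

section GaussianIntegral

variable {m : ℕ}

/-- The Gaussian integral `∫ f(x) exp(-|x|²) dx` over `ℝᵐ`. -/
def gaussianIntegral (f : (Fin m → ℝ) → ℂ) : ℂ :=
  ∫ x, f x * Real.exp (-(x ⬝ᵥ x))

theorem integrable_dotProduct_self_rpow_mul_exp_neg {a : ℝ} (ha : 0 ≤ a) :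
    Integrable fun x : Fin (m + 1) → ℝ => (x ⬝ᵥ x) ^ a * Real.exp (-(x ⬝ᵥ x)) := by
  have hradial : IntegrableOn
      (fun r : ℝ => r ^ m • ((r ^ 2) ^ a * Real.exp (-r ^ 2))) (Set.Ioi 0) := by
    have hs : -1 < m + 2 * a := by
      have : (0 : ℝ) ≤ m := m.cast_nonneg
      linarith
    refine (integrableOn_rpow_mul_exp_neg_rpow hs two_pos).congr_fun (fun r hr => ?_)
      measurableSet_Ioi
    have hr : 0 < r := hr
    simp only [smul_eq_mul, Real.rpow_add hr, Real.rpow_mul hr.le, Real.rpow_natCast,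
      Real.rpow_two, mul_assoc]
  have hE := (integrable_fun_norm_addHaar (E := EuclideanSpace ℝ (Fin (m + 1))) volume
    (f := fun r : ℝ => (r ^ 2) ^ a * Real.exp (-r ^ 2))).mpr (by simpa using hradial)
  have hcoord := (PiLp.volume_preserving_toLp (Fin (m + 1))).integrable_comp_of_integrable hE
  simpa [Function.comp_def, EuclideanSpace.norm_sq_eq, dotProduct, ← sq] using hcoord

theorem integral_Ioi_pow_mul_cpw_sq_mul_exp_neg_sq {W : ℂ} (hW : 0 < ((m + 1 : ℂ) / 2 + W).re) :
    ∫ r in Set.Ioi (0 : ℝ), r ^ m • (cpw (r ^ 2) W * Real.exp (-r ^ 2)) =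
      Complex.Gamma ((m + 1) / 2 + W) / 2 := by
  rw [Complex.Gamma_eq_integral hW, Complex.GammaIntegral,
    ← integral_comp_rpow_Ioi_of_pos (g := fun x : ℝ => (Real.exp (-x) : ℂ) *
      (x : ℂ) ^ ((m + 1 : ℂ) / 2 + W - 1)) two_pos, ← integral_div]
  refine setIntegral_congr_fun measurableSet_Ioi fun r (hr : 0 < r) => ?_
  obtain ⟨u, rfl⟩ : ∃ u, Real.exp u = r := ⟨Real.log r, Real.exp_log hr⟩
  have hpow : Real.exp u ^ m * cpw (Real.exp u ^ 2) W =
      Real.exp u * cpw (Real.exp u ^ 2) ((m + 1) / 2 + W - 1) := by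
    simp only [← Real.exp_nat_mul, cpw_exp, Complex.ofReal_exp, ← Complex.exp_nat_mul,
      ← Complex.exp_add]
    congr 1
    push_cast
    ring
  rw [Real.rpow_two, ← cpw_eq_cpow (by positivity), show (2 : ℝ) - 1 = 1 by norm_num, Real.rpow_one]
  simp only [Complex.real_smul, Complex.ofReal_mul, Complex.ofReal_pow, Complex.ofReal_ofNat]
  linear_combination (Real.exp (-Real.exp u ^ 2) : ℂ) * hpow

theorem gaussianIntegral_cpw {W : ℂ} (hW : 0 < ((m + 1 : ℂ) / 2 + W).re) :
    gaussianIntegral (fun x : Fin (m + 1) → ℝ => cpw (x ⬝ᵥ x) W) =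
      √Real.pi ^ (m + 1) / Real.Gamma ((m + 1) / 2) * Complex.Gamma ((m + 1) / 2 + W) := by
  have hball : volume.real (Metric.ball (0 : EuclideanSpace ℝ (Fin (m + 1))) 1) =
      √Real.pi ^ (m + 1) / ((m + 1) / 2 * Real.Gamma ((m + 1) / 2)) := by
    rw [← Real.Gamma_add_one (by positivity), Measure.real, EuclideanSpace.volume_ball]
    have hΓ : 0 < Real.Gamma ((m + 1) / 2 + 1) := Real.Gamma_pos_of_pos (by positivity)
    simpa using div_nonneg (pow_nonneg (Real.sqrt_nonneg Real.pi) (m + 1)) hΓ.le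
  have hpolar := integral_fun_norm_addHaar (E := EuclideanSpace ℝ (Fin (m + 1))) volume
    fun r : ℝ => cpw (r ^ 2) W * Real.exp (-r ^ 2)
  rw [← (PiLp.volume_preserving_toLp (Fin (m + 1))).integral_comp
    (MeasurableEquiv.toLp 2 _).measurableEmbedding] at hpolar
  simp only [EuclideanSpace.norm_sq_eq, Real.norm_eq_abs, sq_abs, finrank_euclideanSpace,
    Fintype.card_fin, add_tsub_cancel_right, integral_Ioi_pow_mul_cpw_sq_mul_exp_neg_sq hW,
    hball] at hpolar
  simp only [gaussianIntegral, dotProduct, ← sq, hpolar, nsmul_eq_mul, Complex.real_smul]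
  have hm : (m + 1 : ℂ) ≠ 0 := m.cast_add_one_ne_zero
  push_cast
  field_simp

theorem gaussianIntegral_cpw_ne_zero {W : ℂ} (hW : 0 < ((m + 1 : ℂ) / 2 + W).re) :
    gaussianIntegral (fun x : Fin (m + 1) → ℝ => cpw (x ⬝ᵥ x) W) ≠ 0 := by
  have hΓ : Real.Gamma ((m + 1) / 2) ≠ 0 := (Real.Gamma_pos_of_pos (by positivity)).ne'
  have hpi : √Real.pi ≠ 0 := (Real.sqrt_pos.mpr Real.pi_pos).ne'
  rw [gaussianIntegral_cpw hW]
  refine mul_ne_zero (div_ne_zero (pow_ne_zero _ ?_) ?_) (Complex.Gamma_ne_zero_of_re_pos hW)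
  exacts [Complex.ofReal_ne_zero.mpr hpi, Complex.ofReal_ne_zero.mpr hΓ]

theorem gaussianIntegral_cpw_add_two {W : ℂ} (hW : 0 < ((m + 1 : ℂ) / 2 + W).re) :
    (m + 1) * gaussianIntegral (fun x : Fin (m + 3) → ℝ => cpw (x ⬝ᵥ x) W) =
      Real.pi * (m + 1 + 2 * W) *
        gaussianIntegral (fun x : Fin (m + 1) → ℝ => cpw (x ⬝ᵥ x) W) := by
  have hshift : (((m + 2 : ℕ) : ℂ) + 1) / 2 + W = ((m + 1) / 2 + W) + 1 := by
    push_cast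
    ring
  have hW' : 0 < (((m + 2 : ℕ) + 1 : ℂ) / 2 + W).re := by
    rw [hshift, Complex.add_re, Complex.one_re]
    positivity
  have hreal : (((m + 2 : ℕ) : ℝ) + 1) / 2 = (m + 1) / 2 + 1 := by
    push_cast
    ring
  have hW0 : (m + 1 : ℂ) / 2 + W ≠ 0 := fun h => hW.ne' (by rw [h, Complex.zero_re])
  have hpi : (√Real.pi : ℂ) ^ 2 = Real.pi := by
    rw [← Complex.ofReal_pow, Real.sq_sqrt Real.pi_pos.le]
  have hm : (m + 1 : ℂ) ≠ 0 := m.cast_add_one_ne_zero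
  rw [gaussianIntegral_cpw hW, gaussianIntegral_cpw hW', hshift, hreal,
    Real.Gamma_add_one (by positivity), Complex.Gamma_add_one _ hW0, pow_add _ (m + 1) 2, hpi]
  push_cast
  field_simp

theorem dotProduct_self_eq_init_add (x : Fin (m + 1) → ℝ) :
    x ⬝ᵥ x = Fin.init x ⬝ᵥ Fin.init x + x (Fin.last m) ^ 2 := by
  rw [sq]
  exact Fin.sum_univ_castSucc _

theorem gaussianIntegral_comp_init (f : (Fin m → ℝ) → ℂ) :
    gaussianIntegral (fun x : Fin (m + 1) → ℝ => f (Fin.init x)) =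
      √Real.pi * gaussianIntegral f := by
  have hsplit := (volume_preserving_piFinSuccAbove (fun _ : Fin (m + 1) => ℝ)
    (Fin.last m)).integral_comp' fun p : ℝ × (Fin m → ℝ) =>
      (Real.exp (-1 * p.1 ^ 2) : ℂ) * (f p.2 * Real.exp (-(p.2 ⬝ᵥ p.2)))
  have hline : ∫ a : ℝ, (Real.exp (-1 * a ^ 2) : ℂ) = √Real.pi := by
    rw [integral_complex_ofReal, integral_gaussian, div_one]
  rw [gaussianIntegral, gaussianIntegral, ← hline, ← integral_prod_mul, ← Measure.volume_eq_prod,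
    ← hsplit]
  refine integral_congr_ae (.of_forall fun x => ?_)
  simp only [MeasurableEquiv.piFinSuccAbove_apply, Fin.insertNthEquiv_last,
    Fin.snocEquiv_symm_apply, dotProduct_self_eq_init_add x, neg_add, Real.exp_add,
    Complex.ofReal_mul, neg_one_mul]
  ring

end GaussianIntegral

section SphereAverage

variable {m : ℕ}

theorem orthogonal_mulVec_dotProduct_mulVec (g : OG m) (x : Fin m → ℝ) :
    (g.1 *ᵥ x) ⬝ᵥ (g.1 *ᵥ x) = x ⬝ᵥ x := by
  rw [dotProduct_mulVec, vecMul_mulVec, (mem_orthogonalGroup_iff' _ _).mp g.2, vecMul_one]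

theorem measurePreserving_orthogonal_mulVec (g : OG m) :
    MeasurePreserving (fun x : Fin m → ℝ => g.1 *ᵥ x) := by
  have hdet : |g.1.det| = 1 :=
    abs_det_eq_one_of_mul_transpose_eq_one ((mem_orthogonalGroup_iff _ _).mp g.2)
  have hmap := Real.map_matrix_volume_pi_eq_smul_volume_pi (M := g.1) fun h => by simp [h] at hdet
  rw [abs_inv, hdet, inv_one, ENNReal.ofReal_one, one_smul] at hmap
  exact ⟨(LinearMap.continuous_of_finiteDimensional (toLin' g.1)).measurable, hmap⟩

/-- The average of `f` over the unit sphere of `ℝᵐ⁺¹`, realized as the law of the first column of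
a Haar random orthogonal matrix. -/
def sphereAverage (f : (Fin (m + 1) → ℝ) → ℂ) : ℂ :=
  ∫ h : OG (m + 1), f (h.1.col 0) ∂haarOG (m + 1)

theorem orthogonal_col_dotProduct_self (h : OG (m + 1)) : h.1.col 0 ⬝ᵥ h.1.col 0 = 1 := by
  rw [← mulVec_single_one, orthogonal_mulVec_dotProduct_mulVec]
  simp

/-- Homogeneity of degree `2W` with respect to the power `cpw` that vanishes at zero: in particular
`f 0 = 0`. -/
def IsCpwHomogeneous (W : ℂ) (f : (Fin m → ℝ) → ℂ) : Prop :=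
  ∀ t x, f (t • x) = cpw (t ^ 2) W * f x

theorem exists_eq_smul_orthogonal_col (x : Fin (m + 1) → ℝ) :
    ∃ (t : ℝ) (g : OG (m + 1)), x = t • g.1.col 0 := by
  by_cases hx : x = 0
  · exact ⟨0, 1, by rw [hx, zero_smul]⟩
  have hpos : 0 < x ⬝ᵥ x :=
    lt_of_le_of_ne (Finset.sum_nonneg fun i _ => mul_self_nonneg (x i))
      (Ne.symm (dotProduct_self_eq_zero.not.mpr hx))
  have hunit : ((√(x ⬝ᵥ x))⁻¹ • x) ⬝ᵥ ((√(x ⬝ᵥ x))⁻¹ • x) = 1 := by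
    rw [smul_dotProduct, dotProduct_smul, smul_smul, ← mul_inv, Real.mul_self_sqrt hpos.le,
      smul_eq_mul, inv_mul_cancel₀ hpos.ne']
  obtain ⟨g, hg⟩ := exists_orthogonal_col_eq 0 hunit
  exact ⟨√(x ⬝ᵥ x), g, by rw [hg, smul_inv_smul₀ (Real.sqrt_pos.mpr hpos).ne']⟩

theorem integral_haarOG_mulVec {W : ℂ} {f : (Fin (m + 1) → ℝ) → ℂ}
    (hf : IsCpwHomogeneous W f) (x : Fin (m + 1) → ℝ) :
    ∫ h : OG (m + 1), f (h.1 *ᵥ x) ∂haarOG (m + 1) = cpw (x ⬝ᵥ x) W * sphereAverage f := by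
  obtain ⟨t, g, hx⟩ : ∃ (t : ℝ) (g : OG (m + 1)), x = t • g.1.col 0 :=
    exists_eq_smul_orthogonal_col x
  have hnorm : x ⬝ᵥ x = t ^ 2 := by
    rw [hx, smul_dotProduct, dotProduct_smul, orthogonal_col_dotProduct_self]
    simp [sq]
  have hcol (h : OG (m + 1)) : f (h.1 *ᵥ x) = cpw (t ^ 2) W * f ((h * g).1.col 0) := by
    rw [hx, mulVec_smul, hf, ← mulVec_single_one, mulVec_mulVec, mulVec_single_one]
    rfl
  simp only [hcol, hnorm, integral_const_mul, sphereAverage]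
  rw [integral_mul_right_eq_self (fun h : OG (m + 1) => f (h.1.col 0)) g]

theorem gaussianIntegral_eq_sphereAverage_mul {W : ℂ} {f : (Fin (m + 1) → ℝ) → ℂ}
    (hf : IsCpwHomogeneous W f)
    (hint : Integrable fun x : Fin (m + 1) → ℝ => f x * Real.exp (-(x ⬝ᵥ x))) :
    gaussianIntegral f =
      sphereAverage f * gaussianIntegral (fun x : Fin (m + 1) → ℝ => cpw (x ⬝ᵥ x) W) := by
  have hmeas : Measurable (Function.uncurry fun (h : OG (m + 1)) (x : Fin (m + 1) → ℝ) =>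
      h.1 *ᵥ x) := Continuous.measurable (by fun_prop)
  rw [gaussianIntegral, integral_eq_integral_integral_of_measurePreserving
    (ν := haarOG (m + 1)) hmeas measurePreserving_orthogonal_mulVec hint, gaussianIntegral,
    ← integral_const_mul]
  simp only [orthogonal_mulVec_dotProduct_mulVec, integral_mul_const, integral_haarOG_mulVec hf,
    mul_assoc, mul_left_comm]

theorem integrable_mul_exp_neg_of_norm_le {a : ℝ} (ha : 0 ≤ a) {f : (Fin (m + 1) → ℝ) → ℂ}
    (hf : Measurable f) (hbound : ∀ x, ‖f x‖ ≤ (x ⬝ᵥ x) ^ a) :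
    Integrable fun x : Fin (m + 1) → ℝ => f x * Real.exp (-(x ⬝ᵥ x)) := by
  refine (integrable_dotProduct_self_rpow_mul_exp_neg ha).mono' ?_ (.of_forall fun x => ?_)
  · exact (hf.mul (Continuous.measurable (by fun_prop))).aestronglyMeasurable
  · rw [norm_mul, Complex.norm_real, Real.norm_of_nonneg (Real.exp_nonneg _)]
    exact mul_le_mul_of_nonneg_right (hbound x) (Real.exp_nonneg _)

theorem sphereAverage_comp_init_init {W : ℂ} (hW : 0 ≤ W.re) {f : (Fin (m + 1) → ℝ) → ℂ}
    (hmeas : Measurable f) (hf : IsCpwHomogeneous W f) (hbound : ∀ x, ‖f x‖ ≤ (x ⬝ᵥ x) ^ W.re) :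
    sphereAverage (fun x : Fin (m + 3) → ℝ => f (Fin.init (Fin.init x : Fin (m + 2) → ℝ))) =
      sphereAverage f * ((m + 1) / (m + 1 + 2 * W)) := by
  have hre : 0 < ((m + 1 : ℂ) / 2 + W).re := by
    have : ((m + 1 : ℂ) / 2).re = (m + 1) / 2 := by simp
    rw [Complex.add_re, this]
    positivity
  have hden : (m + 1 + 2 * W : ℂ) ≠ 0 := fun h => hre.ne' <| by
    rw [show (m + 1 : ℂ) / 2 + W = (m + 1 + 2 * W) / 2 by ring, h, zero_div, Complex.zero_re]
  have hinit {k : ℕ} (x : Fin (k + 1) → ℝ) : Fin.init x ⬝ᵥ Fin.init x ≤ x ⬝ᵥ x :=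
    (le_add_of_nonneg_right (sq_nonneg _)).trans_eq (dotProduct_self_eq_init_add x).symm
  have hnonneg {k : ℕ} (x : Fin k → ℝ) : 0 ≤ x ⬝ᵥ x :=
    Finset.sum_nonneg fun i _ => mul_self_nonneg (x i)
  set g : (Fin (m + 3) → ℝ) → ℂ := fun x => f (Fin.init (Fin.init x : Fin (m + 2) → ℝ))
  have hgmeas : Measurable g := hmeas.comp (Continuous.measurable (by fun_prop))
  have hg : IsCpwHomogeneous W g := fun t x => hf t _
  have hgbound (x) : ‖g x‖ ≤ (x ⬝ᵥ x) ^ W.re :=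
    (hbound _).trans (Real.rpow_le_rpow (hnonneg _) ((hinit _).trans (hinit _)) hW)
  have hdrop : gaussianIntegral g = Real.pi * gaussianIntegral f := by
    rw [gaussianIntegral_comp_init fun y => f (Fin.init y), gaussianIntegral_comp_init f,
      ← mul_assoc, ← Complex.ofReal_mul, Real.mul_self_sqrt Real.pi_pos.le]
  rw [gaussianIntegral_eq_sphereAverage_mul hf (integrable_mul_exp_neg_of_norm_le hW hmeas hbound),
    gaussianIntegral_eq_sphereAverage_mul (m := m + 2) hg
      (integrable_mul_exp_neg_of_norm_le hW hgmeas hgbound)] at hdrop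
  have hne := gaussianIntegral_cpw_ne_zero hre
  have hpi : (Real.pi : ℂ) ≠ 0 := Complex.ofReal_ne_zero.mpr Real.pi_ne_zero
  rw [mul_div_assoc', eq_div_iff hden]
  refine mul_left_cancel₀ (mul_ne_zero hpi hne) ?_
  linear_combination (m + 1 : ℂ) * hdrop - sphereAverage g * gaussianIntegral_cpw_add_two hre

end SphereAverage

section PartialNorms

variable {m : ℕ}

theorem partialNormSq_smul (r : ℕ) (t : ℝ) (x : Fin m → ℝ) :
    partialNormSq r (t • x) = t ^ 2 * partialNormSq r x := by
  simp [partialNormSq, Finset.mul_sum, mul_pow]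

theorem partialNormSq_nonneg (r : ℕ) (x : Fin m → ℝ) : 0 ≤ partialNormSq r x :=
  Finset.sum_nonneg fun i _ => by split_ifs <;> positivity

theorem partialNormSq_le (r : ℕ) (x : Fin m → ℝ) : partialNormSq r x ≤ x ⬝ᵥ x :=
  Finset.sum_le_sum fun i _ => by
    split_ifs
    exacts [(sq (x i)).le, mul_self_nonneg (x i)]

theorem partialNormSq_self (x : Fin m → ℝ) : partialNormSq m x = x ⬝ᵥ x := by
  simp [partialNormSq, dotProduct, sq]

theorem partialNormSq_one (x : Fin (m + 1) → ℝ) : partialNormSq 1 x = x 0 ^ 2 := by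
  simp [partialNormSq]

theorem partialNormSq_init {r : ℕ} (h : r ≤ m) (x : Fin (m + 1) → ℝ) :
    partialNormSq r (Fin.init x) = partialNormSq r x := by
  simp [partialNormSq, Fin.sum_univ_castSucc, Fin.init, h.not_gt]

theorem measurable_partialNormSq (r : ℕ) : Measurable (partialNormSq r : (Fin m → ℝ) → ℝ) :=
  Finset.measurable_sum _ fun i _ => by split_ifs <;> fun_prop

/-- The product `∏_{j < N} (x₀² + ⋯ + x_{2j}²)^{w_j}` of powers of the partial norms of odd
length. -/
def partialNormPower (N : ℕ) (w : ℕ → ℂ) (x : Fin m → ℝ) : ℂ :=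
  ∏ j ∈ Finset.range N, cpw (partialNormSq (2 * j + 1) x) (w j)

theorem isCpwHomogeneous_partialNormPower (N : ℕ) (w : ℕ → ℂ) :
    IsCpwHomogeneous (∑ j ∈ Finset.range (N + 1), w j)
      (partialNormPower (N + 1) w : (Fin m → ℝ) → ℂ) := fun t x => by
  simp only [partialNormPower, partialNormSq_smul, cpw_mul, Finset.prod_mul_distrib,
    cpw_sum Finset.nonempty_range_add_one]

theorem measurable_partialNormPower (N : ℕ) (w : ℕ → ℂ) :
    Measurable (partialNormPower N w : (Fin m → ℝ) → ℂ) :=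
  Finset.measurable_prod _ fun _ _ => (measurable_cpw _).comp (measurable_partialNormSq _)

theorem norm_partialNormPower_le {N : ℕ} {w : ℕ → ℂ} (hw : ∀ j < N, 0 ≤ (w j).re)
    (x : Fin m → ℝ) :
    ‖partialNormPower N w x‖ ≤ (x ⬝ᵥ x) ^ (∑ j ∈ Finset.range N, w j).re := by
  have hx : 0 ≤ x ⬝ᵥ x := (partialNormSq_nonneg 0 x).trans (partialNormSq_le 0 x)
  rw [partialNormPower, norm_prod, Complex.re_sum,
    Real.rpow_sum_of_nonneg hx fun j hj => hw j (Finset.mem_range.mp hj)]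
  refine Finset.prod_le_prod (fun _ _ => norm_nonneg _) fun j hj =>
    norm_cpw_le (hw j (Finset.mem_range.mp hj)) ?_
  rw [abs_of_nonneg (partialNormSq_nonneg _ _)]
  exact partialNormSq_le _ _

theorem partialNormPower_init {N : ℕ} (h : 2 * N ≤ m + 1) (w : ℕ → ℂ) (x : Fin (m + 1) → ℝ) :
    partialNormPower N w (Fin.init x) = partialNormPower N w x :=
  Finset.prod_congr rfl fun j hj => by
    have := Finset.mem_range.mp hj
    rw [partialNormSq_init (by omega)]

theorem partialNormPower_eq_zero (N : ℕ) (w : ℕ → ℂ) {x : Fin (m + 1) → ℝ} (hx : x 0 = 0) :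
    partialNormPower (N + 1) w x = 0 :=
  Finset.prod_eq_zero (Finset.mem_range.mpr N.succ_pos) (by
    simp [partialNormSq_one, hx, cpw_zero_left])

theorem sphereAverage_partialNormPower_succ (N : ℕ) (w : ℕ → ℂ) :
    sphereAverage (m := 2 * N) (partialNormPower (N + 1) w) =
      sphereAverage (m := 2 * N) (partialNormPower N w) := by
  refine integral_congr_ae (.of_forall fun h => ?_)
  simp only [partialNormPower, Finset.prod_range_succ]
  rw [partialNormSq_self, orthogonal_col_dotProduct_self, cpw_one_left, mul_one]

theorem sphereAverage_partialNormPower {N : ℕ} {w : ℕ → ℂ} (hw : ∀ j < N, 0 ≤ (w j).re) :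
    sphereAverage (m := 2 * N) (partialNormPower N w) =
      ∏ l ∈ Finset.range N,
        ((2 * l + 1 : ℂ) / (2 * l + 1 + 2 * ∑ j ∈ Finset.range (l + 1), w j)) := by
  induction N with
  | zero => simp [sphereAverage, partialNormPower]
  | succ N ih =>
    have hW : 0 ≤ (∑ j ∈ Finset.range (N + 1), w j).re := by
      rw [Complex.re_sum]
      exact Finset.sum_nonneg fun j hj => hw j (Finset.mem_range.mp hj)
    have hrec := sphereAverage_comp_init_init hW (measurable_partialNormPower (N + 1) w)
      (isCpwHomogeneous_partialNormPower (m := 2 * N + 1) N w) (norm_partialNormPower_le hw)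
    have hinit (x : Fin (2 * N + 3) → ℝ) :
        partialNormPower (N + 1) w (Fin.init (Fin.init x : Fin (2 * N + 2) → ℝ)) =
          partialNormPower (N + 1) w x := by
      rw [partialNormPower_init (by omega), partialNormPower_init (by omega)]
    simp only [hinit, sphereAverage_partialNormPower_succ N] at hrec
    rw [Finset.prod_range_succ, ← ih fun j hj => hw j (hj.trans N.lt_succ_self)]
    exact_mod_cast hrec

end PartialNorms

section MinorPower

variable {n m : ℕ}

/-- The product `∏_{j ≤ n} det(X_{[2j]})^{w_{j-1}}` of powers of leading principal minors. -/
def minorPower (h : 2 * n ≤ m) (w : ℕ → ℂ) (X : Matrix (Fin m) (Fin m) ℝ) : ℂ :=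
  ∏ j : Fin n, cpw (leadingBlock ((Nat.mul_le_mul_left 2 j.isLt).trans h) X).det (w j)

theorem measurable_minorPower (h : 2 * n ≤ m) (w : ℕ → ℂ) : Measurable (minorPower h w) :=
  Finset.measurable_prod _ fun _ _ => (measurable_cpw _).comp <|
    Continuous.measurable (continuous_id.matrix_submatrix _ _).matrix_det

theorem abs_det_leadingBlock_le {r : ℕ} (hr : r ≤ m) {X : Matrix (Fin m) (Fin m) ℝ}
    (hX : X ∈ OG m) : |(leadingBlock hr X).det| ≤ r.factorial := by
  have hentry (i j : Fin r) : |leadingBlock hr X i j| ≤ 1 := entry_norm_bound_of_unitary hX _ _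
  simpa using det_le (abv := AbsoluteValue.abs) (x := 1) hentry

theorem integrable_minorPower_comp {E : Type*} [MeasurableSpace E] {μ : Measure E}
    [IsFiniteMeasure μ] (h : 2 * n ≤ m) {w : ℕ → ℂ} (hw : ∀ j < n, 0 ≤ (w j).re)
    {φ : E → Matrix (Fin m) (Fin m) ℝ} (hφ : Measurable φ) (hφO : ∀ x, φ x ∈ OG m) :
    Integrable (fun x => minorPower h w (φ x)) μ := by
  refine Integrable.of_bound (((measurable_minorPower h w).comp hφ).aestronglyMeasurable)
    (∏ j : Fin n, ((2 * (j.val + 1)).factorial : ℝ) ^ (w j).re) (.of_forall fun x => ?_)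
  rw [minorPower, norm_prod]
  exact Finset.prod_le_prod (fun _ _ => norm_nonneg _) fun j _ =>
    norm_cpw_le (hw j j.isLt) (abs_det_leadingBlock_le _ (hφO x))

theorem minorPower_eq_zero (h : 2 * (n + 1) ≤ m + 2) (w : ℕ → ℂ)
    {X : Matrix (Fin (m + 2)) (Fin (m + 2)) ℝ} (h0 : X 0 0 = 0) (h1 : X 0 1 = 0) :
    minorPower h w X = 0 := by
  have hblock (hr : 2 ≤ m + 2) : (leadingBlock hr X).det = 0 := by
    have h00 : leadingBlock hr X 0 0 = 0 := h0
    have h01 : leadingBlock hr X 0 1 = 0 := h1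
    rw [det_fin_two, h00, h01, zero_mul, zero_mul, sub_zero]
  exact Finset.prod_eq_zero (Finset.mem_univ (0 : Fin (n + 1)))
    ((congrArg (cpw · _) (hblock _)).trans (cpw_zero_left _))

theorem exists_minorPower_skewBorder_eq (h : 2 * n ≤ m) (w : ℕ → ℂ) (g : OG (m + 1)) :
    ∃ k : OG m, ∀ X : Matrix (Fin m) (Fin m) ℝ,
      minorPower (n := n + 1) (Nat.add_le_add_right h 2) w
          (skewBorder (g.1.col 0) (orthConj g (skewBorder 0 X))) =
        partialNormPower (n + 1) w (g.1.col 0) *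
          minorPower h (fun j => w (j + 1)) (orthConj k X) := by
  by_cases h0 : g.1 0 0 = 0
  · refine ⟨1, fun X => ?_⟩
    rw [partialNormPower_eq_zero n w (x := g.1.col 0) h0, zero_mul]
    exact minorPower_eq_zero _ _ rfl h0
  · obtain ⟨k, hk⟩ := exists_det_leadingBlock_skewBorder_eq g h0
    refine ⟨k, fun X => ?_⟩
    have hminor : minorPower h (fun j => w (j + 1)) (orthConj k X) =
        ∏ j : Fin (n + 1), cpw (leadingBlock ((Nat.mul_le_mul_left 2 j.is_le).trans h)
          (orthConj k X)).det (w j) := by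
      have hempty : cpw (leadingBlock (Nat.zero_le m) (orthConj k X)).det (w 0) = 1 := by
        rw [det_fin_zero, cpw_one_left]
      rw [Fin.prod_univ_succ]
      exact ((congrArg (· * _) hempty).trans (one_mul _)).symm
    rw [hminor, partialNormPower, ← Fin.prod_univ_eq_prod_range, ← Finset.prod_mul_distrib]
    refine Finset.prod_congr rfl fun j _ => ?_
    rw [← cpw_mul, ← hk]

theorem integral_minorPower_orthConj_blockEmbed (h : 2 * n ≤ m) {w : ℕ → ℂ}
    (hw : ∀ j < n + 1, 0 ≤ (w j).re) {c : ℂ}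
    (hc : ∀ Y : Matrix (Fin m) (Fin m) ℝ, IsOrthComplexStructure Y →
      ∫ k, minorPower h (fun j => w (j + 1)) (orthConj k Y) ∂haarOG m = c)
    {X : Matrix (Fin (m + 2)) (Fin (m + 2)) ℝ} (hX : IsOrthComplexStructure X) :
    ∫ g, minorPower (n := n + 1) (Nat.add_le_add_right h 2) w (orthConj (blockEmbed g) X)
        ∂haarOG (m + 1) =
      sphereAverage (m := m) (partialNormPower (n + 1) w) * c := by
  obtain ⟨b, Y, hY, hbX⟩ := hX.exists_conj_blockEmbed_eq
  set Z := skewBorder (Pi.single 0 1) (skewBorder 0 Y) with hZ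
  set F := minorPower (n := n + 1) (Nat.add_le_add_right h 2) w with hF
  have hint : Integrable (fun g : OG (m + 1) => F (orthConj (blockEmbed g) Z)) (haarOG (m + 1)) :=
    integrable_minorPower_comp _ hw
      ((continuous_orthConj Z).comp continuous_blockEmbed).measurable fun g =>
        ((hbX ▸ hX.conj _ : IsOrthComplexStructure Z).conj _).mem_orthogonalGroup
  have hright (g : OG (m + 1)) (t : OG m) :
      orthConj (blockEmbed (g * blockEmbed t)) Z =
        skewBorder (g.1.col 0) (orthConj g (skewBorder 0 (orthConj t Y))) := by
    rw [hZ, orthConj_blockEmbed_skewBorder, orthConj_mul, orthConj_blockEmbed_skewBorder,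
      mulVec_zero, mulVec_single_one, col_zero_mul_blockEmbed]
  have hfiber (g : OG (m + 1)) :
      ∫ t, F (orthConj (blockEmbed (g * blockEmbed t)) Z) ∂haarOG m =
        partialNormPower (n + 1) w (g.1.col 0) * c := by
    obtain ⟨k, hk⟩ := exists_minorPower_skewBorder_eq h w g
    simp only [hright, hF, hk, ← orthConj_mul, integral_const_mul]
    rw [integral_mul_left_eq_self (fun t => minorPower h (fun j => w (j + 1)) (orthConj t Y)) k,
      hc Y hY]
  rw [← integral_mul_right_eq_self _ b]
  simp only [map_mul, orthConj_mul, hbX]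
  rw [integral_eq_integral_integral_of_measurePreserving (ν := haarOG m)
    (φ := fun t g => g * blockEmbed t)
    (measurable_snd.mul (continuous_blockEmbed.measurable.comp measurable_fst))
    (fun t => measurePreserving_mul_right _ _) hint]
  simp only [hfiber, integral_mul_const, sphereAverage]

theorem integral_minorPower_orthConj_succ (h : 2 * n ≤ m) {w : ℕ → ℂ}
    (hw : ∀ j < n + 1, 0 ≤ (w j).re) {c : ℂ}
    (hc : ∀ Y : Matrix (Fin m) (Fin m) ℝ, IsOrthComplexStructure Y →
      ∫ k, minorPower h (fun j => w (j + 1)) (orthConj k Y) ∂haarOG m = c)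
    {X : Matrix (Fin (m + 2)) (Fin (m + 2)) ℝ} (hX : IsOrthComplexStructure X) :
    ∫ g, minorPower (n := n + 1) (Nat.add_le_add_right h 2) w (orthConj g X) ∂haarOG (m + 2) =
      sphereAverage (m := m) (partialNormPower (n + 1) w) * c := by
  have hint : Integrable (fun g : OG (m + 2) =>
      minorPower (n := n + 1) (Nat.add_le_add_right h 2) w (orthConj g X)) (haarOG (m + 2)) :=
    integrable_minorPower_comp _ hw (continuous_orthConj X).measurable fun g =>
      (hX.conj g).mem_orthogonalGroup
  rw [integral_eq_integral_integral_of_measurePreserving (ν := haarOG (m + 1))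
    (φ := fun t g => blockEmbed t * g)
    ((continuous_blockEmbed.measurable.comp measurable_fst).mul measurable_snd)
    (fun t => measurePreserving_mul_left _ _) hint]
  simp only [orthConj_mul, integral_minorPower_orthConj_blockEmbed h hw hc (hX.conj _),
    integral_const, probReal_univ, one_smul]

end MinorPower

section ClosedFormula

theorem factorial_two_mul_div_factorial (n : ℕ) :
    ((2 * n).factorial : ℂ) / n.factorial = ∏ l ∈ Finset.range n, (2 * (2 * l + 1) : ℂ) := by
  induction n with
  | zero => simp
  | succ n ih =>
    have hfac : (n.factorial : ℂ) ≠ 0 := by exact_mod_cast n.factorial_ne_zero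
    have hn : (n : ℂ) + 1 ≠ 0 := by exact_mod_cast n.succ_ne_zero
    rw [Finset.prod_range_succ, ← ih, Nat.mul_add_one, Nat.factorial_succ, Nat.factorial_succ,
      Nat.factorial_succ]
    push_cast
    field_simp
    ring

theorem prod_filter_fst_lt_snd_succ {M : Type*} [CommMonoid M] (n : ℕ)
    (f : Fin (n + 1) → Fin (n + 1) → M) :
    ∏ p : Fin (n + 1) × Fin (n + 1) with p.1 < p.2, f p.1 p.2 =
      (∏ l : Fin n, f 0 l.succ) * ∏ p : Fin n × Fin n with p.1 < p.2, f p.1.succ p.2.succ := by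
  simp [Finset.prod_filter, Fintype.prod_prod_type, Fin.prod_univ_succ]

variable {n : ℕ} {w : ℕ → ℂ}

theorem zero_sub_eq_two_mul_sum {s : Fin (n + 1) → ℂ}
    (hs : ∀ j : Fin n, s j.castSucc - s j.succ = 2 * w j + 2) (i : Fin (n + 1)) :
    s 0 - s i = 2 * ∑ j ∈ Finset.range i, w j + 2 * i := by
  induction i using Fin.induction with
  | zero => simp
  | succ i ih =>
    rw [Fin.val_succ, Finset.sum_range_succ, Nat.cast_add_one]
    rw [Fin.val_castSucc] at ih
    linear_combination ih + hs i

theorem sphereAverage_partialNormPower_eq_div {s : Fin (n + 1) → ℂ}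
    (hw : ∀ j < n, 0 ≤ (w j).re)
    (hs : ∀ j : Fin n, s j.castSucc - s j.succ = 2 * w j + 2) :
    sphereAverage (m := 2 * n) (partialNormPower n w) =
      ((2 * n).factorial / n.factorial : ℂ) / ∏ l : Fin n, (2 * (s 0 - s l.succ - 1)) := by
  rw [sphereAverage_partialNormPower hw, factorial_two_mul_div_factorial,
    ← Fin.prod_univ_eq_prod_range, ← Fin.prod_univ_eq_prod_range, ← Finset.prod_div_distrib]
  refine Finset.prod_congr rfl fun l _ => ?_
  have hl : s 0 - s l.succ - 1 = 2 * l + 1 + 2 * ∑ j ∈ Finset.range (l + 1), w j := by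
    rw [zero_sub_eq_two_mul_sum hs, Fin.val_succ, Nat.cast_add_one]
    ring
  rw [hl, mul_div_mul_left _ _ two_ne_zero]

theorem integral_minorPower_orthConj {s : Fin n → ℂ}
    (hw : ∀ j < n, 0 ≤ (w j).re)
    (hs : ∀ (j : ℕ) (h : j + 1 < n), s ⟨j, j.lt_of_succ_lt h⟩ - s ⟨j + 1, h⟩ = 2 * w j + 2)
    {X : Matrix (Fin (2 * n)) (Fin (2 * n)) ℝ} (hX : IsOrthComplexStructure X) :
    ∫ k, minorPower le_rfl w (orthConj k X) ∂haarOG (2 * n) =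
      (∏ j ∈ Finset.range n, ((2 * j).factorial / j.factorial : ℂ)) /
        ∏ p : Fin n × Fin n with p.1 < p.2, (2 * (s p.1 - s p.2 - 1)) := by
  induction n generalizing w with
  | zero => simp [minorPower]
  | succ n ih =>
    have htail (Y : Matrix (Fin (2 * n)) (Fin (2 * n)) ℝ) (hY : IsOrthComplexStructure Y) :=
      ih (w := fun j => w (j + 1)) (s := fun i => s i.succ)
        (fun j hj => hw _ (Nat.succ_lt_succ hj)) (fun j hj => hs _ (Nat.succ_lt_succ hj)) hY
    rw [Finset.prod_range_succ, prod_filter_fst_lt_snd_succ n fun i j => 2 * (s i - s j - 1),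
      mul_comm (∏ j ∈ Finset.range n, _), ← div_mul_div_comm,
      ← sphereAverage_partialNormPower_eq_div (fun j hj => hw j (hj.trans n.lt_succ_self))
        fun j => hs j (Nat.succ_lt_succ j.isLt),
      ← sphereAverage_partialNormPower_succ]
    exact integral_minorPower_orthConj_succ le_rfl hw htail hX

end ClosedFormula

section SphericalIntegral

theorem isOrthComplexStructure_Dmat_one (n : ℕ) :
    IsOrthComplexStructure (Dmat fun _ : Fin n => 1) where
  transpose_eq_neg := by
    ext i j
    simp only [Dmat, transpose_apply, Matrix.neg_apply, of_apply]
    split_ifs <;> first | (exfalso; omega) | norm_num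
  mul_transpose_eq_one := by
    ext i j
    obtain ⟨partner, hpartner⟩ : ∃ k : Fin (2 * n),
        k.val = if i.val % 2 = 0 then i.val + 1 else i.val - 1 :=
      ⟨⟨if i.val % 2 = 0 then i.val + 1 else i.val - 1, by split_ifs <;> omega⟩, rfl⟩
    rw [mul_apply, Finset.sum_eq_single partner]
    · simp only [Dmat, transpose_apply, of_apply, one_apply, Fin.ext_iff]
      split_ifs at * <;> first | (exfalso; omega) | norm_num
    · intro k _ hk
      have hne : k.val ≠ partner.val := Fin.val_ne_of_ne hk
      apply mul_eq_zero_of_left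
      simp only [Dmat, of_apply]
      split_ifs at * <;> first | (exfalso; omega) | norm_num
    · exact fun h => absurd (Finset.mem_univ partner) h

variable {n : ℕ}

theorem cpw_det_leadingBlock_eq_one {m r : ℕ} (h : r ≤ m) (hr : m ≤ r)
    {X : Matrix (Fin m) (Fin m) ℝ} (hX : X * Xᵀ = 1) (v : ℂ) :
    cpw (leadingBlock h X).det v = 1 := by
  obtain rfl := h.antisymm hr
  exact cpw_eq_one_of_abs_eq_one (abs_det_eq_one_of_mul_transpose_eq_one hX) v

theorem sphInt_eq_integral_minorPower {w : ℕ → ℂ} {s : Fin n → ℂ}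
    (hw : ∀ j : Fin n, j.val + 1 < n → w j = expo n s j) (μ : Measure (OG (2 * n)))
    {X : Matrix (Fin (2 * n)) (Fin (2 * n)) ℝ} (hX : IsOrthComplexStructure X) :
    sphInt n μ s X = ∫ k, minorPower le_rfl w (orthConj k X) ∂μ := by
  refine integral_congr_ae (.of_forall fun k => Finset.prod_congr rfl fun j _ => ?_)
  have hj : 2 * (j.val + 1) ≤ 2 * n := Nat.mul_le_mul_left 2 j.isLt
  change cpw (leadingBlock hj (orthConj k X)).det _ = cpw (leadingBlock hj (orthConj k X)).det _
  by_cases h : j.val + 1 < n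
  · rw [hw j h]
  · have hfull : 2 * n ≤ 2 * (j.val + 1) := Nat.mul_le_mul_left 2 (not_lt.mp h)
    have hk := (hX.conj k).mul_transpose_eq_one
    rw [cpw_det_leadingBlock_eq_one hj hfull hk, cpw_det_leadingBlock_eq_one hj hfull hk]

theorem sphInt_at_identity_general (μ : Measure (OG (2 * n))) [μ.IsHaarMeasure]
    [IsProbabilityMeasure μ] (s : Fin n → ℂ)
    (hre : ∀ j : Fin n, ∀ h : j.val + 1 < n, 2 ≤ (s j - s ⟨j.val + 1, h⟩).re)
    {X : Matrix (Fin (2 * n)) (Fin (2 * n)) ℝ} (hX : IsOrthComplexStructure X) :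
    sphInt n μ s X =
      (∏ j ∈ Finset.range n, ((2 * j).factorial / j.factorial : ℂ)) /
        ∏ p : Fin n × Fin n with p.1 < p.2, (2 * (s p.1 - s p.2 - 1)) := by
  let w : ℕ → ℂ := fun j => if h : j < n ∧ j + 1 < n then expo n s ⟨j, h.1⟩ else 0
  have hw_eq (j : Fin n) (h : j.val + 1 < n) : w j = expo n s j := dif_pos ⟨j.isLt, h⟩
  have hdiff (j : ℕ) (h : j + 1 < n) :
      s ⟨j, j.lt_of_succ_lt h⟩ - s ⟨j + 1, h⟩ = 2 * w j + 2 := by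
    rw [hw_eq ⟨j, j.lt_of_succ_lt h⟩ h, expo, dif_pos h]
    ring
  have hw (j : ℕ) (hj : j < n) : 0 ≤ (w j).re := by
    by_cases h : j + 1 < n
    · have hre_diff := congrArg Complex.re (hdiff j h)
      norm_num at hre_diff
      have hgap := hre ⟨j, hj⟩ h
      rw [Complex.sub_re] at hgap
      linarith
    · have hw_zero : w j = 0 := dif_neg fun hj => h hj.2
      rw [hw_zero, Complex.zero_re]
  rw [sphInt_eq_integral_minorPower hw_eq μ hX, eq_haarOG _ μ,
    integral_minorPower_orthConj hw hdiff hX]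

end SphericalIntegral

/-- Eq. (A.5) of the paper: the value of `f_n(s, D(1))`. -/
theorem sphInt_at_identity (n : ℕ) (hn : 1 ≤ n)
    (μ : Measure (OG (2 * n))) (hμ : μ.IsHaarMeasure) (hμ1 : IsProbabilityMeasure μ)
    (s : Fin n → ℂ) (hs : Function.Injective s)
    (hre : ∀ j : Fin n, ∀ h : j.val + 1 < n, 2 ≤ (s j - s ⟨j.val + 1, h⟩).re) :
    sphInt n μ s (Dmat (fun _ => 1)) =
      (∏ j ∈ Finset.range n, ((Nat.factorial (2 * j) : ℂ) / (Nat.factorial j : ℂ))) /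
        ∏ p ∈ Finset.univ.filter (fun p : Fin n × Fin n => p.1 < p.2),
          (2 * (s p.1 - s p.2 - 1)) :=
  sphInt_at_identity_general μ s hre (isOrthComplexStructure_Dmat_one n)

end
end

section
/- Let n ≥ 1 and let p ∈ L¹((0,∞)ⁿ) be symmetric under permutations of its arguments. For t ∈ ℝⁿ set σ(t)_j := i·t_j + 3n − 2j (j = 1,…,n) and define Ŝp(σ(t)) := (∏_{j=0}^{n−1} 2^j·j!) · ∫_{(0,∞)ⁿ} p(a) · (∏_j a_j)^{−(2n−1)} · det[a_c^{σ(t)_b+n−1}]_{b,c=1..n} / (Δ_n(a²)·Δ_n(σ(t)_1,…,σ(t)_n)) da, and assume this integral converges absolutely for every t ∈ ℝⁿ. Let ζ(z) := cos(z) / ∏_{k=1}^n (1 − 4z²/(π(2k−1))²). Then, for almost every a ∈ (0,∞)ⁿ, p(a) = [Δ_n(a²) / ((n!)² ∏_{j=0}^{n−1} 2^j·j!)] · lim_{ε→0⁺} (2π)^{−n} ∫_{ℝⁿ} Ŝp(σ(t)) · (∏_{l=1}^n ζ(ε t_l)) · Δ_n(σ(t)_1,…,σ(t)_n) · det[a_c^{−i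 t_b − 2n + 2b − 1}]_{b,c=1..n} dt. -/
open MeasureTheory Matrix Filter
open scoped BigOperators Real Topology

noncomputable section

/-- The shifted contour parameters `σ(t)_j = i t_j + 3n - 2j`, `j = 1,…,n`. -/
def sigC (n : ℕ) (t : Fin n → ℝ) (j : Fin n) : ℂ :=
  Complex.I * (t j : ℂ) + 3 * (n : ℂ) - 2 * ((j : ℕ) + 1 : ℂ)

/-- The spherical transform `Ŝp(σ(t))` of a symmetric function `p ∈ L¹((0,∞)ⁿ)`. -/
def ShatP (n : ℕ) (p : (Fin n → ℝ) → ℝ) (t : Fin n → ℝ) : ℂ :=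
  ((∏ j ∈ Finset.range n, 2 ^ j * Nat.factorial j : ℕ) : ℂ) *
    ∫ a in {a : Fin n → ℝ | ∀ j, 0 < a j},
      ((p a * (∏ j, a j) ^ (-(2 * (n : ℝ) - 1)) : ℝ) : ℂ) *
        (Matrix.of fun b c : Fin n => cpw (a c) (sigC n t b + (n : ℂ) - 1)).det /
          (((vdm fun j => (a j) ^ 2 : ℝ) : ℂ) * vdm (sigC n t))

/-! In the variables `u = log a` the spherical transform pairs `p(a) / Δ(a²)` with the exponential
determinant `det (exp (z_k u_c))` along the vertical lines `z_k = 2(n - k) + i t_k`, and the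
inversion integral pairs the result with a second such determinant. The function `ζ` is the cosine
transform of a density proportional to `cos(πx/2)^(2n-1)` on `[-1, 1]`, as repeated integration by
parts shows. Hence, after Fubini, one-dimensional Fourier inversion in each `t_k` turns the product
of the two determinants into a signed sum over pairs of permutations of product kernels of
logarithmic width `ε`. Since `p / Δ(a²)` is antisymmetric, each of the `(n!)²` terms tends to its
value at `a` at every Lebesgue point.

Fubini rests on the bound `|det (exp (z_k u_c))| |Δ(Re z)| ≤ |Δ(z)| |det (exp (Re z_k u_c))|`: on
the lines above it dominates the transform by a polynomial in `t` times an integral of `|p|`, and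
`ζ` decays like `|t|^(-2n)`. -/

section Vandermonde

variable {m : ℕ} {R : Type*} [CommRing R]

lemma vdm_eq_det_vandermonde (x : Fin m → R) : vdm x = (vandermonde x).det := by
  rw [det_vandermonde, vdm, Finset.prod_filter, Fintype.prod_prod_type]
  refine Finset.prod_congr rfl fun i _ => ?_
  rw [← Finset.prod_filter]
  exact Finset.prod_congr (by ext j; simp) fun _ _ => rfl

lemma vdm_succ (x : Fin (m + 1) → R) :
    vdm x = (∏ k : Fin m, (x k.succ - x 0)) * vdm (x ∘ Fin.succ) := by
  simp only [vdm_eq_det_vandermonde, det_vandermonde, Fin.prod_univ_succ, Fin.prod_Ioi_zero,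
    Fin.prod_Ioi_succ, Function.comp_apply]

lemma vdm_comp_perm (x : Fin m → R) (e : Equiv.Perm (Fin m)) :
    vdm (x ∘ e) = (Equiv.Perm.sign e : ℤ) * vdm x := by
  rw [vdm_eq_det_vandermonde, vdm_eq_det_vandermonde, ← det_permute]
  rfl

lemma vdm_sub_const (x : Fin m → R) (r : R) : vdm (fun i => x i - r) = vdm x := by
  simp only [vdm, sub_sub_sub_cancel_right]

lemma vdm_ne_zero_iff [IsDomain R] {x : Fin m → R} : vdm x ≠ 0 ↔ Function.Injective x := by
  rw [vdm_eq_det_vandermonde, det_vandermonde_ne_zero_iff]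

lemma vdm_nonneg {x : Fin m → ℝ} (hx : Monotone x) : 0 ≤ vdm x :=
  Finset.prod_nonneg fun _ hp => sub_nonneg.2 (hx (Finset.mem_filter.1 hp).2.le)

lemma norm_sign_mul {ι : Type*} [Fintype ι] [DecidableEq ι] (e : Equiv.Perm ι) (w : ℂ) :
    ‖((Equiv.Perm.sign e : ℤ) : ℂ) * w‖ = ‖w‖ := by
  rcases Int.units_eq_one_or (Equiv.Perm.sign e) with h | h <;> simp [h]

lemma abs_vdm_comp_perm (x : Fin m → ℝ) (e : Equiv.Perm (Fin m)) : |vdm (x ∘ e)| = |vdm x| := by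
  rw [vdm_comp_perm]
  rcases Int.units_eq_one_or (Equiv.Perm.sign e) with h | h <;> simp [h]

lemma norm_vdm_comp_perm (x : Fin m → ℂ) (e : Equiv.Perm (Fin m)) :
    ‖vdm (x ∘ e)‖ = ‖vdm x‖ := by
  rw [vdm_comp_perm, norm_sign_mul]

end Vandermonde

section DetIntegral

variable {ι : Type*} [Fintype ι] [DecidableEq ι] {X : ι → Type*} [∀ i, MeasurableSpace (X i)]
  {μ : ∀ i, Measure (X i)} [∀ i, SigmaFinite (μ i)]

lemma integrable_det_pi {f : ι → ∀ j, X j → ℂ} (hf : ∀ i j, Integrable (f i j) (μ j)) :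
    Integrable (fun x : ∀ i, X i => (Matrix.of fun i j => f i j (x j)).det) (Measure.pi μ) := by
  simp only [det_apply', of_apply]
  exact integrable_finsetSum _ fun σ _ =>
    (Integrable.fintype_prod_dep fun j => hf (σ j) j).const_mul _

lemma integral_det_pi {f : ι → ∀ j, X j → ℂ} (hf : ∀ i j, Integrable (f i j) (μ j)) :
    ∫ x : ∀ i, X i, (Matrix.of fun i j => f i j (x j)).det ∂Measure.pi μ =
      (Matrix.of fun i j => ∫ x, f i j x ∂μ j).det := by
  simp only [det_apply', of_apply]
  rw [integral_finsetSum _ fun σ _ =>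
    (Integrable.fintype_prod_dep fun j => hf (σ j) j).const_mul _]
  refine Finset.sum_congr rfl fun σ _ => ?_
  rw [integral_const_mul, integral_fintype_prod_eq_prod (fun j => f (σ j) j)]

lemma integral_det_mul_det_pi {f g : ι → ∀ j, X j → ℂ}
    (hfg : ∀ i k j, Integrable (fun x => f i j x * g k j x) (μ j)) :
    ∫ x : ∀ i, X i, (Matrix.of fun i j => f i j (x j)).det *
        (Matrix.of fun i j => g i j (x j)).det ∂Measure.pi μ =
      ∑ ρ : Equiv.Perm ι, ∑ τ : Equiv.Perm ι,
        ((Equiv.Perm.sign ρ : ℤ) : ℂ) * ((Equiv.Perm.sign τ : ℤ) : ℂ) *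
          ∏ j, ∫ x, f (ρ j) j x * g (τ j) j x ∂μ j := by
  have hterm (ρ τ : Equiv.Perm ι) : Integrable (fun x : ∀ i, X i =>
      ((Equiv.Perm.sign ρ : ℤ) : ℂ) * ((Equiv.Perm.sign τ : ℤ) : ℂ) *
        ∏ j, f (ρ j) j (x j) * g (τ j) j (x j)) (Measure.pi μ) :=
    (Integrable.fintype_prod_dep fun j => hfg (ρ j) (τ j) j).const_mul _
  have hexpand (x : ∀ i, X i) : (Matrix.of fun i j => f i j (x j)).det *
      (Matrix.of fun i j => g i j (x j)).det = ∑ ρ : Equiv.Perm ι, ∑ τ : Equiv.Perm ι,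
        ((Equiv.Perm.sign ρ : ℤ) : ℂ) * ((Equiv.Perm.sign τ : ℤ) : ℂ) *
          ∏ j, f (ρ j) j (x j) * g (τ j) j (x j) := by
    simp only [det_apply', of_apply, Finset.sum_mul_sum, Finset.prod_mul_distrib, mul_mul_mul_comm]
  simp only [hexpand]
  rw [integral_finsetSum _ fun ρ _ => integrable_finsetSum _ fun τ _ => hterm ρ τ]
  refine Finset.sum_congr rfl fun ρ _ => ?_
  rw [integral_finsetSum _ fun τ _ => hterm ρ τ]
  refine Finset.sum_congr rfl fun τ _ => ?_
  rw [integral_const_mul,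
    integral_fintype_prod_eq_prod (fun j x => f (ρ j) j x * g (τ j) j x)]

end DetIntegral

section ExponentialDeterminant

variable {m : ℕ}

lemma det_eq_det_sub_of_row_zero_eq_one {R : Type*} [CommRing R]
    {A : Matrix (Fin (m + 1)) (Fin (m + 1)) R} (hA : ∀ c, A 0 c = 1) :
    A.det = (Matrix.of fun k c : Fin m => A k.succ c.succ - A k.succ c.castSucc).det := by
  let B : Matrix (Fin (m + 1)) (Fin (m + 1)) R := Matrix.of fun k c =>
    Fin.cases (A k 0) (fun j => A k j.succ - A k j.castSucc) c
  rw [det_eq_of_forall_col_eq_smul_add_pred (B := B) (fun _ => 1) (fun i => by simp [B])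
    (fun i j => by simp [B]), det_succ_row_zero, Fin.sum_univ_succ,
    Finset.sum_eq_zero fun j _ => by simp [B, hA]]
  simp [B, hA, submatrix]

lemma mul_integral_exp_mul (z : ℂ) (u w : ℝ) :
    z * ∫ v in u..w, Complex.exp (z * v) = Complex.exp (z * w) - Complex.exp (z * u) := by
  rcases eq_or_ne z 0 with rfl | hz
  · simp
  · rw [integral_exp_mul_complex hz, mul_div_cancel₀ _ hz]

/-- The generalized Vandermonde determinant `det (x_c ^ z_k)`, written in the logarithmic
variables `u = log x`. -/
def expDet (z : Fin m → ℂ) (u : Fin m → ℝ) : ℂ :=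
  (Matrix.of fun k c : Fin m => Complex.exp (z k * u c)).det

lemma continuous_expDet :
    Continuous fun q : (Fin m → ℂ) × (Fin m → ℝ) => expDet q.1 q.2 :=
  Continuous.matrix_det <| continuous_pi fun k => continuous_pi fun c => by
    simp only [of_apply]; fun_prop

lemma expDet_comp_perm_left (z : Fin m → ℂ) (u : Fin m → ℝ) (e : Equiv.Perm (Fin m)) :
    expDet (z ∘ e) u = (Equiv.Perm.sign e : ℤ) * expDet z u := by
  rw [expDet, expDet, ← det_permute]
  rfl

lemma expDet_comp_perm_right (z : Fin m → ℂ) (u : Fin m → ℝ) (e : Equiv.Perm (Fin m)) :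
    expDet z (u ∘ e) = (Equiv.Perm.sign e : ℤ) * expDet z u := by
  rw [expDet, expDet, ← det_permute']
  rfl

lemma expDet_add_const (z : Fin m → ℂ) (w : ℂ) (u : Fin m → ℝ) :
    expDet (fun k => z k + w) u = (∏ c, Complex.exp (w * u c)) * expDet z u := by
  rw [expDet, expDet, ← det_mul_row]
  congr with k c
  rw [of_apply, ← Complex.exp_add]
  ring_nf

lemma expDet_natCast (u : Fin m → ℝ) :
    expDet (fun k => (k : ℕ)) u = vdm fun c => Complex.exp (u c) := by
  rw [vdm_eq_det_vandermonde, ← det_transpose, expDet]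
  congr with k c
  simp [← Complex.exp_nat_mul]

lemma expDet_smul (s : ℝ) (z : Fin m → ℂ) (u : Fin m → ℝ) :
    expDet (fun k => s * z k) u = expDet z (s • u) := by
  simp only [expDet, Pi.smul_apply, smul_eq_mul, Complex.ofReal_mul, mul_left_comm, mul_assoc]

lemma integrableOn_expDet_Icc (z : Fin m → ℂ) (u w : Fin m → ℝ) :
    IntegrableOn (expDet z) (Set.Icc u w) :=
  (continuous_expDet.comp (Continuous.prodMk_right z)).continuousOn.integrableOn_compact
    isCompact_Icc

/- Factor the first row out, take differences of neighbouring columns and write each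
difference of exponentials as an integral between neighbouring nodes. -/
lemma expDet_succ (z : Fin (m + 1) → ℂ) {u : Fin (m + 1) → ℝ} (hu : Monotone u) :
    expDet z u = (∏ c, Complex.exp (z 0 * u c)) * (∏ k : Fin m, (z k.succ - z 0)) *
      ∫ v in Set.Icc (u ∘ Fin.castSucc) (u ∘ Fin.succ), expDet (fun k => z k.succ - z 0) v := by
  have hint (k c : Fin m) : Integrable (fun v : ℝ => Complex.exp ((z k.succ - z 0) * v))
      (volume.restrict (Set.Icc (u c.castSucc) (u c.succ))) :=
    Continuous.integrableOn_Icc (by fun_prop)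
  have hbox : ∫ v in Set.Icc (u ∘ Fin.castSucc) (u ∘ Fin.succ),
      expDet (fun k => z k.succ - z 0) v = (Matrix.of fun k c : Fin m =>
        ∫ v in Set.Icc (u c.castSucc) (u c.succ), Complex.exp ((z k.succ - z 0) * v)).det := by
    rw [← integral_det_pi hint, ← Measure.restrict_pi_pi, Set.pi_univ_Icc]
    rfl
  have hshift := expDet_add_const (fun k => z k - z 0) (z 0) u
  simp only [sub_add_cancel] at hshift
  rw [hshift, hbox, mul_assoc, ← det_mul_column, expDet,
    det_eq_det_sub_of_row_zero_eq_one (by simp)]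
  congr with k c
  simp only [of_apply]
  rw [integral_Icc_eq_integral_Ioc,
    ← intervalIntegral.integral_of_le (hu Fin.castSucc_lt_succ.le), mul_integral_exp_mul]

lemma expDet_ofReal_succ (x : Fin (m + 1) → ℝ) {u : Fin (m + 1) → ℝ} (hu : Monotone u) :
    expDet (fun k => (x k : ℂ)) u =
      (((∏ c, Real.exp (x 0 * u c)) * ∏ k : Fin m, (x k.succ - x 0) : ℝ) : ℂ) *
        ∫ v in Set.Icc (u ∘ Fin.castSucc) (u ∘ Fin.succ),
          expDet (fun k => ((x k.succ - x 0 : ℝ) : ℂ)) v := by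
  simp [expDet_succ _ hu]

lemma monotone_of_mem_Icc_interlacing {u : Fin (m + 1) → ℝ} (hu : Monotone u) {v : Fin m → ℝ}
    (hv : v ∈ Set.Icc (u ∘ Fin.castSucc) (u ∘ Fin.succ)) : Monotone v :=
  monotone_iff_forall_lt.2 fun i j hij =>
    ((hv.2 i).trans (hu (Fin.succ_le_castSucc_iff.2 hij))).trans (hv.1 j)

lemma norm_setIntegral_expDet_mul_le {z z' : Fin m → ℂ} {u w : Fin m → ℝ} {c C : ℝ} (hc : 0 ≤ c)
    (h : ∀ v ∈ Set.Icc u w, ‖expDet z v‖ * c ≤ C * (expDet z' v).re) :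
    ‖∫ v in Set.Icc u w, expDet z v‖ * c ≤ C * (∫ v in Set.Icc u w, expDet z' v).re := by
  calc ‖∫ v in Set.Icc u w, expDet z v‖ * c ≤ (∫ v in Set.Icc u w, ‖expDet z v‖) * c :=
        mul_le_mul_of_nonneg_right (norm_integral_le_integral_norm _) hc
    _ ≤ ∫ v in Set.Icc u w, C * (expDet z' v).re := by
        rw [← integral_mul_const]
        exact setIntegral_mono_on ((integrableOn_expDet_Icc _ _ _).norm.mul_const _)
          ((integrableOn_expDet_Icc _ _ _).re.const_mul _) measurableSet_Icc h
    _ = C * (∫ v in Set.Icc u w, expDet z' v).re := by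
        rw [integral_const_mul]
        exact congrArg _ (integral_re (integrableOn_expDet_Icc _ _ _))

lemma norm_expDet_mul_vdm_re_le_of_monotone : ∀ {m : ℕ} {z : Fin m → ℂ} {u : Fin m → ℝ},
    Monotone (fun k => (z k).re) → Monotone u →
    ‖expDet z u‖ * vdm (fun k => (z k).re) ≤
      ‖vdm z‖ * (expDet (fun k => ((z k).re : ℂ)) u).re
  | 0, _, _, _, _ => by simp [expDet, vdm]
  | m + 1, z, u, hz, hu => by
    set z' : Fin m → ℂ := fun k => z k.succ - z 0
    set x' : Fin m → ℝ := fun k => (z k.succ).re - (z 0).re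
    set box := Set.Icc (u ∘ Fin.castSucc) (u ∘ Fin.succ)
    have hx' : Monotone x' := fun i j hij => sub_le_sub_right (hz (Fin.succ_le_succ_iff.2 hij)) _
    have hbox : ‖∫ v in box, expDet z' v‖ * vdm x' ≤
        ‖vdm z'‖ * (∫ v in box, expDet (fun k => (x' k : ℂ)) v).re :=
      norm_setIntegral_expDet_mul_le (vdm_nonneg hx') fun v hv =>
        norm_expDet_mul_vdm_re_le_of_monotone hx' (monotone_of_mem_Icc_interlacing hu hv)
    set E : ℝ := ∏ c, Real.exp ((z 0).re * u c)
    set P : ℝ := ∏ k, x' k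
    have hE : ‖∏ c, Complex.exp (z 0 * u c)‖ = E := by simp [E, norm_prod, Complex.norm_exp]
    have : 0 ≤ E := hE ▸ norm_nonneg _
    have hP : 0 ≤ P := Finset.prod_nonneg fun k _ => sub_nonneg.2 (hz (Fin.zero_le _))
    rw [expDet_succ z hu, expDet_ofReal_succ _ hu, Complex.re_ofReal_mul, vdm_succ, vdm_succ,
      norm_mul, norm_mul, norm_mul, hE, ← vdm_sub_const (z ∘ Fin.succ) (z 0),
      ← vdm_sub_const ((fun k => (z k).re) ∘ Fin.succ) (z 0).re]
    calc E * ‖∏ k, z' k‖ * ‖∫ v in box, expDet z' v‖ * (P * vdm x')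
        = E * P * ‖∏ k, z' k‖ * (‖∫ v in box, expDet z' v‖ * vdm x') := by ring
      _ ≤ E * P * ‖∏ k, z' k‖ * (‖vdm z'‖ * (∫ v in box, expDet (fun k => (x' k : ℂ)) v).re) := by
          gcongr
      _ = ‖∏ k, z' k‖ * ‖vdm z'‖ *
          (E * P * (∫ v in box, expDet (fun k => (x' k : ℂ)) v).re) := by ring

lemma norm_expDet_mul_abs_vdm_re_le (z : Fin m → ℂ) (u : Fin m → ℝ) :
    ‖expDet z u‖ * |vdm fun k => (z k).re| ≤
      ‖vdm z‖ * ‖expDet (fun k => ((z k).re : ℂ)) u‖ := by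
  set e := Tuple.sort fun k => (z k).re
  set s := Tuple.sort u
  have hz : Monotone fun k => ((z ∘ e) k).re := Tuple.monotone_sort fun k => (z k).re
  have hsorted := norm_expDet_mul_vdm_re_le_of_monotone hz (Tuple.monotone_sort u)
  rw [← abs_of_nonneg (vdm_nonneg hz)] at hsorted
  have hvdm : |vdm fun k => ((z ∘ e) k).re| = |vdm fun k => (z k).re| :=
    abs_vdm_comp_perm (fun k => (z k).re) e
  have hsort (w : Fin m → ℂ) : ‖expDet (w ∘ e) (u ∘ s)‖ = ‖expDet w u‖ := by
    rw [expDet_comp_perm_left, expDet_comp_perm_right, norm_sign_mul, norm_sign_mul]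
  rw [hvdm, hsort, norm_vdm_comp_perm] at hsorted
  refine hsorted.trans (mul_le_mul_of_nonneg_left ?_ (norm_nonneg _))
  rw [← hsort]
  exact Complex.re_le_norm _

lemma norm_expDet_le (z : Fin m → ℂ) (u : Fin m → ℝ) :
    ‖expDet z u‖ ≤ ∑ σ : Equiv.Perm (Fin m), ∏ c, Real.exp ((z (σ c)).re * u c) := by
  rw [expDet, det_apply']
  refine (norm_sum_le _ _).trans (Finset.sum_le_sum fun σ _ => ?_)
  rw [norm_sign_mul, norm_prod]
  simp [Complex.norm_exp]

/-- The point with coordinates `e k + i t k` on the product of the vertical lines `Re s_k = e k`,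
along which the spherical transform is inverted. -/
def linePoint (e t : Fin m → ℝ) (k : Fin m) : ℂ := e k + Complex.I * t k

lemma linePoint_re (e t : Fin m → ℝ) (k : Fin m) : (linePoint e t k).re = e k := by
  simp [linePoint]

lemma continuous_linePoint (e : Fin m → ℝ) : Continuous (linePoint e) :=
  continuous_pi fun k => by unfold linePoint; fun_prop

lemma norm_expDet_linePoint_mul_le (e t u : Fin m → ℝ) :
    ‖expDet (linePoint e t) u‖ * |vdm e| ≤
      ‖vdm (linePoint e t)‖ * ‖expDet (fun k => (e k : ℂ)) u‖ := by
  simpa only [linePoint_re] using norm_expDet_mul_abs_vdm_re_le (linePoint e t) u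

end ExponentialDeterminant

section CosineTransform

/-- The cosine transform `z ↦ ∫ φ(x) cos(z x) dx`, which is the Fourier transform for even `φ`. -/
def cosTransform (φ : ℝ → ℝ) (z : ℝ) : ℝ := ∫ x, φ x * Real.cos (z * x)

/-- A continuous even probability density supported on `[-1, 1]`: the profile of an
approximate identity. -/
structure IsBumpProfile (φ : ℝ → ℝ) : Prop where
  continuous : Continuous φ
  even (x : ℝ) : φ (-x) = φ x
  nonneg (x : ℝ) : 0 ≤ φ x
  eq_zero_of_one_le_abs {x : ℝ} (hx : 1 ≤ |x|) : φ x = 0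
  integral_eq_one : ∫ x, φ x = 1

lemma IsBumpProfile.hasCompactSupport {φ : ℝ → ℝ} (hφ : IsBumpProfile φ) :
    HasCompactSupport φ :=
  HasCompactSupport.intro (isCompact_closedBall (0 : ℝ) 1) fun x hx =>
    hφ.eq_zero_of_one_le_abs <| by
      simpa using (not_le.1 (mt mem_closedBall_zero_iff.2 hx)).le

lemma IsBumpProfile.integrable {φ : ℝ → ℝ} (hφ : IsBumpProfile φ) : Integrable φ :=
  hφ.continuous.integrable_of_hasCompactSupport hφ.hasCompactSupport

lemma continuous_cosTransform {φ : ℝ → ℝ} (hφ : Integrable φ) : Continuous (cosTransform φ) := by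
  refine continuous_of_dominated (bound := fun x => ‖φ x‖) (fun z => ?_) (fun z => ?_) hφ.norm ?_
  · exact hφ.1.mul (by fun_prop : Continuous fun x => Real.cos (z * x)).aestronglyMeasurable
  · refine Eventually.of_forall fun x => ?_
    rw [norm_mul]
    exact mul_le_of_le_one_right (norm_nonneg _) (Real.abs_cos_le_one _)
  · exact Eventually.of_forall fun x => by fun_prop

/-- The integral `∫_{-1}^1 cos(πx/2)^m cos(zx) dx`. -/
def cosPowIntegral (m : ℕ) (z : ℝ) : ℝ :=
  ∫ x in (-1 : ℝ)..1, Real.cos (π / 2 * x) ^ m * Real.cos (z * x)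

lemma cosPowIntegral_zero_right_pos (m : ℕ) : 0 < cosPowIntegral m 0 := by
  refine intervalIntegral.intervalIntegral_pos_of_pos_on
    (Continuous.intervalIntegrable (by fun_prop) _ _) (fun x hx => ?_) (by norm_num)
  have hcos : 0 < Real.cos (π / 2 * x) := Real.cos_pos_of_mem_Ioo
    ⟨by nlinarith [Real.pi_pos, hx.1], by nlinarith [Real.pi_pos, hx.2]⟩
  simpa using pow_pos hcos m

lemma hasDerivAt_cosPow_primitive (m : ℕ) (z x : ℝ) :
    HasDerivAt (fun x => -(π / 2 * (m + 1)) * (Real.cos (π / 2 * x) ^ m * Real.sin (π / 2 * x)) *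
        Real.cos (z * x) + z * Real.cos (π / 2 * x) ^ (m + 1) * Real.sin (z * x))
      ((z ^ 2 - (π / 2 * (m + 1)) ^ 2) * (Real.cos (π / 2 * x) ^ (m + 1) * Real.cos (z * x)) +
        (π / 2) ^ 2 * (m + 1) * m * (Real.cos (π / 2 * x) ^ (m - 1) * Real.cos (z * x))) x := by
  have hπ : HasDerivAt (fun x : ℝ => π / 2 * x) (π / 2) x := by
    simpa using (hasDerivAt_id x).const_mul (π / 2)
  have hz : HasDerivAt (fun x : ℝ => z * x) z x := by
    simpa using (hasDerivAt_id x).const_mul z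
  refine (((((hπ.cos.fun_pow m).mul hπ.sin).const_mul (-(π / 2 * (m + 1)))).mul hz.cos).add
    (((hπ.cos.fun_pow (m + 1)).const_mul z).mul hz.sin)).congr_deriv ?_
  have hs : Real.sin (π / 2 * x) ^ 2 = 1 - Real.cos (π / 2 * x) ^ 2 := Real.sin_sq _
  rcases m with - | m
  · simp only [Pi.mul_apply]
    push_cast
    ring
  · simp only [Pi.mul_apply, Nat.add_sub_cancel]
    push_cast
    generalize Real.cos (π / 2 * x) = c at *
    linear_combination ((π / 2) ^ 2 * (m + 2) * (m + 1) * c ^ m * Real.cos (z * x)) * hs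

lemma cosPowIntegral_recurrence (m : ℕ) (z : ℝ) :
    (z ^ 2 - (π / 2 * (m + 1)) ^ 2) * cosPowIntegral (m + 1) z +
      (π / 2) ^ 2 * (m + 1) * m * cosPowIntegral (m - 1) z =
        -(π * (m + 1) * 0 ^ m * Real.cos z) := by
  have h := intervalIntegral.integral_eq_sub_of_hasDerivAt
    (fun x (_ : x ∈ Set.uIcc (-1 : ℝ) 1) => hasDerivAt_cosPow_primitive m z x)
    (Continuous.intervalIntegrable (by fun_prop) _ _)
  rw [intervalIntegral.integral_add (Continuous.intervalIntegrable (by fun_prop) _ _)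
    (Continuous.intervalIntegrable (by fun_prop) _ _),
    intervalIntegral.integral_const_mul, intervalIntegral.integral_const_mul] at h
  rw [cosPowIntegral, cosPowIntegral, h]
  simp only [mul_one, mul_neg, Real.cos_neg, Real.sin_neg, Real.cos_pi_div_two,
    Real.sin_pi_div_two]
  ring

lemma cosPowIntegral_odd_mul_prod (k : ℕ) (z : ℝ) :
    cosPowIntegral (2 * k + 1) z *
        ∏ j ∈ Finset.range (k + 1), (1 - 4 * z ^ 2 / (π * (2 * (j : ℝ) + 1)) ^ 2) =
      cosPowIntegral (2 * k + 1) 0 * Real.cos z := by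
  have hπ := Real.pi_ne_zero
  induction k with
  | zero =>
    have hbase (z : ℝ) : cosPowIntegral 1 z * (1 - 4 * z ^ 2 / π ^ 2) = 4 / π * Real.cos z := by
      have h := cosPowIntegral_recurrence 0 z
      field_simp at h ⊢
      push_cast at h
      linear_combination (-1) * h
    have h0 := hbase 0
    simp_all
  | succ k ih =>
    have hstep (z : ℝ) : cosPowIntegral (2 * (k + 1) + 1) z *
        (1 - 4 * z ^ 2 / (π * (2 * ((k + 1 : ℕ) : ℝ) + 1)) ^ 2) =
          2 * (k + 1) / (2 * (k + 1) + 1) * cosPowIntegral (2 * k + 1) z := by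
      have h := cosPowIntegral_recurrence (2 * k + 2) z
      have hk : 2 * ((k : ℝ) + 1) + 1 ≠ 0 := by positivity
      rw [zero_pow (by omega), show 2 * k + 2 - 1 = 2 * k + 1 by omega] at h
      rw [show 2 * (k + 1) + 1 = 2 * k + 2 + 1 by omega]
      push_cast at h ⊢
      field_simp at h ⊢
      linear_combination (-1) * h
    have h0 := hstep 0
    rw [zero_pow two_ne_zero, mul_zero, zero_div, sub_zero, mul_one] at h0
    rw [Finset.prod_range_succ, mul_left_comm, hstep, h0, mul_left_comm, mul_comm (∏ j ∈ _, _), ih,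
      mul_assoc]

/-- The profile proportional to `cos(πx/2)^m` on `[-1, 1]`. Truncating `|x|` at `1` extends it by
`0` when `0 < m`. -/
def cosPowBump (m : ℕ) (x : ℝ) : ℝ :=
  (cosPowIntegral m 0)⁻¹ * Real.cos (π / 2 * min |x| 1) ^ m

lemma cosPowBump_eq_zero {m : ℕ} (hm : m ≠ 0) {x : ℝ} (hx : 1 ≤ |x|) : cosPowBump m x = 0 := by
  simp [cosPowBump, min_eq_right hx, hm]

lemma cosTransform_cosPowBump {m : ℕ} (hm : m ≠ 0) (z : ℝ) :
    cosTransform (cosPowBump m) z = (cosPowIntegral m 0)⁻¹ * cosPowIntegral m z := by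
  have hsupp : ∀ x ∉ Set.Ioc (-1 : ℝ) 1, cosPowBump m x * Real.cos (z * x) = 0 := fun x hx => by
    rw [cosPowBump_eq_zero hm, zero_mul]
    by_contra! h
    exact hx ⟨(abs_lt.1 h).1, (abs_lt.1 h).2.le⟩
  rw [cosTransform, ← setIntegral_eq_integral_of_forall_compl_eq_zero hsupp,
    ← intervalIntegral.integral_of_le (by norm_num), cosPowIntegral.eq_1 m z,
    ← intervalIntegral.integral_const_mul]
  refine intervalIntegral.integral_congr fun x hx => ?_
  rw [Set.uIcc_of_le (by norm_num)] at hx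
  have habs : Real.cos (π / 2 * |x|) = Real.cos (π / 2 * x) := by
    rw [← Real.cos_abs (π / 2 * x), abs_mul, abs_of_pos Real.pi_div_two_pos]
  simp only [cosPowBump, min_eq_left (abs_le.2 hx), habs, mul_assoc]

lemma isBumpProfile_cosPowBump {m : ℕ} (hm : m ≠ 0) : IsBumpProfile (cosPowBump m) where
  continuous := by unfold cosPowBump; fun_prop
  even x := by simp [cosPowBump]
  nonneg x := by
    refine mul_nonneg (inv_nonneg.2 (cosPowIntegral_zero_right_pos m).le) (pow_nonneg ?_ _)
    have hmin : 0 ≤ min |x| 1 := le_min (abs_nonneg _) zero_le_one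
    exact Real.cos_nonneg_of_mem_Icc ⟨by nlinarith [Real.pi_pos],
      by nlinarith [Real.pi_pos, min_le_right |x| 1]⟩
  eq_zero_of_one_le_abs := cosPowBump_eq_zero hm
  integral_eq_one := by
    have h := cosTransform_cosPowBump hm 0
    rw [inv_mul_cancel₀ (cosPowIntegral_zero_right_pos m).ne'] at h
    simpa [cosTransform] using h

lemma cosTransform_cosPowBump_mul_prod (k : ℕ) (z : ℝ) :
    cosTransform (cosPowBump (2 * k + 1)) z *
        ∏ j ∈ Finset.range (k + 1), (1 - 4 * z ^ 2 / (π * (2 * (j : ℝ) + 1)) ^ 2) =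
      Real.cos z := by
  rw [cosTransform_cosPowBump (by omega), mul_assoc, cosPowIntegral_odd_mul_prod,
    inv_mul_cancel_left₀ (cosPowIntegral_zero_right_pos _).ne']

lemma finite_setOf_four_mul_sq_eq (d : ℝ) : {z : ℝ | 4 * z ^ 2 = d ^ 2}.Finite := by
  refine (Set.toFinite {d / 2, -(d / 2)}).subset fun z hz => ?_
  rcases sq_eq_sq_iff_eq_or_eq_neg.1 (show (2 * z) ^ 2 = d ^ 2 by rw [← hz]; ring) with h | h
  · exact Or.inl (by linarith)
  · exact Or.inr (show z = -(d / 2) by linarith)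

lemma eq_cosTransform_cosPowBump {k : ℕ} {ζ : ℝ → ℝ} (hζ : Continuous ζ)
    (h : ∀ z : ℝ, (∀ j ∈ Finset.range (k + 1), 4 * z ^ 2 ≠ (π * (2 * (j : ℝ) + 1)) ^ 2) →
      ζ z = Real.cos z /
        ∏ j ∈ Finset.range (k + 1), (1 - 4 * z ^ 2 / (π * (2 * (j : ℝ) + 1)) ^ 2)) :
    ζ = cosTransform (cosPowBump (2 * k + 1)) := by
  have hfin : (⋃ j ∈ Finset.range (k + 1),
      {z : ℝ | 4 * z ^ 2 = (π * (2 * (j : ℝ) + 1)) ^ 2}).Finite :=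
    (Finset.range (k + 1)).finite_toSet.biUnion fun j _ => finite_setOf_four_mul_sq_eq _
  refine hζ.ext_on (hfin.countable.dense_compl ℝ) (continuous_cosTransform
    (isBumpProfile_cosPowBump (by omega)).integrable) fun z hz => ?_
  have hz' : ∀ j ∈ Finset.range (k + 1), 4 * z ^ 2 ≠ (π * (2 * (j : ℝ) + 1)) ^ 2 :=
    fun j hj hj' => hz (Set.mem_biUnion hj hj')
  rw [h z hz', ← cosTransform_cosPowBump_mul_prod k z, mul_div_cancel_right₀]
  refine Finset.prod_ne_zero_iff.2 fun j hj => sub_ne_zero.2 (Ne.symm ?_)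
  rw [Ne, div_eq_one_iff_eq (by positivity)]
  exact hz' j hj

lemma one_add_sq_isBigO_one_sub_div {d : ℝ} (hd : d ≠ 0) :
    (fun z : ℝ => 1 + z ^ 2) =O[cocompact ℝ] fun z => 1 - 4 * z ^ 2 / d ^ 2 := by
  refine Asymptotics.IsBigO.of_bound (d ^ 2) ?_
  filter_upwards [tendsto_norm_cocompact_atTop.eventually_ge_atTop (1 + d ^ 2)] with z hz
  have hd2 : 0 < d ^ 2 := by positivity
  have hz2 : 1 + d ^ 2 ≤ z ^ 2 := by
    rw [← sq_abs z]
    rw [Real.norm_eq_abs] at hz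
    nlinarith
  rw [Real.norm_of_nonneg (by positivity), norm_sub_rev]
  calc 1 + z ^ 2 ≤ d ^ 2 * (4 * z ^ 2 / d ^ 2 - 1) := by
        rw [mul_sub, mul_div_cancel₀ _ hd2.ne']; linarith
    _ ≤ d ^ 2 * ‖4 * z ^ 2 / d ^ 2 - 1‖ := by gcongr; exact le_abs_self _

lemma integrable_pow_mul_of_mul_prod_eq_cos {ζ : ℝ → ℝ} (hζ : Continuous ζ) {n : ℕ} {d : ℕ → ℝ}
    (hd : ∀ j, d j ≠ 0)
    (h : ∀ z, ζ z * ∏ j ∈ Finset.range n, (1 - 4 * z ^ 2 / d j ^ 2) = Real.cos z)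
    {k : ℕ} (hk : k < n) : Integrable fun z => z ^ k * ζ z := by
  have hprod : (fun z : ℝ => (1 + z ^ 2) ^ n) =O[cocompact ℝ]
      fun z => ∏ j ∈ Finset.range n, (1 - 4 * z ^ 2 / d j ^ 2) := by
    simpa using Asymptotics.IsBigO.finsetProd (s := Finset.range n)
      fun j _ => one_add_sq_isBigO_one_sub_div (hd j)
  have hdecay : (fun z => (1 + z ^ 2) ^ n * ζ z) =O[cocompact ℝ] fun _ => (1 : ℝ) := by
    refine (hprod.mul (Asymptotics.isBigO_refl ζ _)).trans (Asymptotics.IsBigO.of_bound 1 ?_)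
    refine Eventually.of_forall fun z => ?_
    rw [mul_comm, h z]
    simpa using Real.abs_cos_le_one z
  have hpow (z : ℝ) : |z| ^ k ≤ (1 + z ^ 2) ^ n * (1 + z ^ 2)⁻¹ := by
    have habs : |z| ≤ 1 + z ^ 2 := by rw [← sq_abs]; nlinarith [sq_nonneg (|z| - 1), abs_nonneg z]
    rw [le_mul_inv_iff₀ (by positivity)]
    calc |z| ^ k * (1 + z ^ 2) ≤ (1 + z ^ 2) ^ k * (1 + z ^ 2) := by gcongr
      _ = (1 + z ^ 2) ^ (k + 1) := (pow_succ _ _).symm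
      _ ≤ (1 + z ^ 2) ^ n := pow_le_pow_right₀ (by nlinarith [sq_nonneg z]) hk
  have hle (z : ℝ) : ‖z ^ k * ζ z‖ ≤ ‖(1 + z ^ 2) ^ n * ζ z * (1 + z ^ 2)⁻¹‖ := by
    rw [mul_right_comm, norm_mul, norm_mul (_ * _), norm_pow, Real.norm_eq_abs z,
      Real.norm_of_nonneg (by positivity : 0 ≤ (1 + z ^ 2) ^ n * (1 + z ^ 2)⁻¹)]
    exact mul_le_mul_of_nonneg_right (hpow z) (norm_nonneg _)
  have hbigO : (fun z => z ^ k * ζ z) =O[cocompact ℝ] fun z => (1 + z ^ 2)⁻¹ :=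
    (Asymptotics.isBigO_of_le _ hle).trans <|
      (hdecay.mul (Asymptotics.isBigO_refl (fun z : ℝ => (1 + z ^ 2)⁻¹) _)).congr_right
        fun z => one_mul _
  exact (by fun_prop : Continuous fun z => z ^ k * ζ z).locallyIntegrable
    |>.integrable_of_isBigO_cocompact hbigO (integrable_inv_one_add_sq.integrableAtFilter _)

lemma integrable_pow_mul_cosTransform_cosPowBump {j k : ℕ} (hj : j < k + 1) :
    Integrable fun z => z ^ j * cosTransform (cosPowBump (2 * k + 1)) z :=
  integrable_pow_mul_of_mul_prod_eq_cos
    (continuous_cosTransform (isBumpProfile_cosPowBump (by omega)).integrable)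
    (fun _ => by positivity) (cosTransform_cosPowBump_mul_prod k) hj

lemma integrable_affine_pow_mul_comp_mul {ζ : ℝ → ℝ} {n : ℕ}
    (hζ : ∀ k < n, Integrable fun z => z ^ k * ζ z) {ε : ℝ} (hε : ε ≠ 0) (c : ℂ) {k : ℕ}
    (hk : k < n) : Integrable fun t : ℝ => (c + Complex.I * t) ^ k * (ζ (ε * t) : ℂ) := by
  have hmoment (j : ℕ) (hj : j < n) : Integrable fun t : ℝ => (t : ℂ) ^ j * (ζ (ε * t) : ℂ) := by
    have h := (((hζ j hj).comp_mul_left' hε).const_mul ((ε ^ j)⁻¹)).ofReal (𝕜 := ℂ)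
    refine h.congr (Eventually.of_forall fun t => ?_)
    simp only [mul_pow, mul_assoc]
    rw [inv_mul_cancel_left₀ (pow_ne_zero _ hε)]
    push_cast
    rfl
  have hexpand (t : ℝ) : (c + Complex.I * t) ^ k * (ζ (ε * t) : ℂ) = ∑ j ∈ Finset.range (k + 1),
      (c ^ (k - j) * Complex.I ^ j * k.choose j) * ((t : ℂ) ^ j * (ζ (ε * t) : ℂ)) := by
    rw [add_comm, add_pow, Finset.sum_mul]
    refine Finset.sum_congr rfl fun j _ => ?_
    ring
  simp only [hexpand]
  exact integrable_finsetSum _ fun j hj =>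
    (hmoment j (by have := Finset.mem_range.1 hj; omega)).const_mul _

end CosineTransform

section FourierInversion

open FourierTransform

variable {φ : ℝ → ℝ}

lemma fourier_ofReal_eq_cosTransform (hφ : Integrable φ) (heven : Function.Even φ) (w : ℝ) :
    𝓕 (fun x => (φ x : ℂ)) w = cosTransform φ (2 * π * w) := by
  have hcos : Integrable fun x => φ x * Real.cos (2 * π * w * x) :=
    hφ.mul_bdd (c := 1) (by fun_prop) (Eventually.of_forall fun x => Real.abs_cos_le_one _)
  have hsin : Integrable fun x => φ x * Real.sin (2 * π * w * x) :=
    hφ.mul_bdd (c := 1) (by fun_prop) (Eventually.of_forall fun x => Real.abs_sin_le_one _)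
  have hodd : ∫ x, φ x * Real.sin (2 * π * w * x) = 0 := by
    have h := integral_neg_eq_self (fun x => φ x * Real.sin (2 * π * w * x)) volume
    simp only [heven _, mul_neg, Real.sin_neg, integral_neg] at h
    linarith
  have hexp (x : ℝ) : Complex.exp (((-2 * π * x * w : ℝ) : ℂ) * Complex.I) • (φ x : ℂ) =
      ((φ x * Real.cos (2 * π * w * x) : ℝ) : ℂ) -
        ((φ x * Real.sin (2 * π * w * x) : ℝ) : ℂ) * Complex.I := by
    rw [Complex.exp_mul_I, ← Complex.ofReal_cos, ← Complex.ofReal_sin,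
      show -2 * π * x * w = -(2 * π * w * x) by ring, Real.cos_neg, Real.sin_neg, smul_eq_mul]
    push_cast
    ring
  rw [Real.fourier_real_eq_integral_exp_smul]
  simp only [hexp]
  rw [integral_sub hcos.ofReal (hsin.ofReal.mul_const _), integral_mul_const,
    integral_complex_ofReal, integral_complex_ofReal, hodd, Complex.ofReal_zero, zero_mul,
    sub_zero, cosTransform]

lemma integral_cosTransform_mul_exp (hc : Continuous φ) (hφ : Integrable φ)
    (heven : Function.Even φ) (hζ : Integrable (cosTransform φ)) (y : ℝ) :
    ∫ t : ℝ, (cosTransform φ t : ℂ) * Complex.exp (Complex.I * t * y) = 2 * π * φ y := by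
  have hFourier : 𝓕 (fun x => (φ x : ℂ)) = fun w => (cosTransform φ (2 * π * w) : ℂ) :=
    funext fun w => fourier_ofReal_eq_cosTransform hφ heven w
  have hinv : (φ y : ℂ) = 𝓕⁻ (𝓕 fun x => (φ x : ℂ)) y := by
    rw [Continuous.fourierInv_fourier_eq (by fun_prop) hφ.ofReal]
    rw [hFourier]
    exact (hζ.comp_mul_left' Real.two_pi_pos.ne').ofReal
  have hscale := Measure.integral_comp_mul_left
    (fun t : ℝ => (cosTransform φ t : ℂ) * Complex.exp (Complex.I * t * y)) (2 * π)
  rw [abs_of_pos (inv_pos.2 Real.two_pi_pos), Complex.real_smul, Complex.ofReal_inv,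
    eq_inv_mul_iff_mul_eq₀ (by simp [Real.pi_ne_zero])] at hscale
  rw [← hscale, hinv, hFourier, Real.fourierInv_eq']
  push_cast
  congr 2 with t
  rw [smul_eq_mul, mul_comm]
  congr 2
  simp only [RCLike.inner_apply, conj_trivial]
  push_cast
  ring

lemma integral_cosTransform_comp_mul_mul_exp (hc : Continuous φ) (hφ : Integrable φ)
    (heven : Function.Even φ) (hζ : Integrable (cosTransform φ)) {ε : ℝ} (hε : 0 < ε) (y : ℝ) :
    ∫ t : ℝ, (cosTransform φ (ε * t) : ℂ) * Complex.exp (Complex.I * t * y) =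
      2 * π * ((ε⁻¹ * φ (y / ε) : ℝ) : ℂ) := by
  have h := Measure.integral_comp_mul_left
    (fun t : ℝ => (cosTransform φ t : ℂ) * Complex.exp (Complex.I * t * ((y / ε : ℝ) : ℂ))) ε
  rw [integral_cosTransform_mul_exp hc hφ heven hζ, abs_of_pos (inv_pos.2 hε),
    Complex.real_smul] at h
  rw [Complex.ofReal_mul, mul_left_comm, ← h]
  congr with t
  have hε' : (ε : ℂ) ≠ 0 := mod_cast hε.ne'
  push_cast
  field_simp

end FourierInversion

section LebesguePoint

variable {X : Type*} [PseudoMetricSpace X] {f g : X → ℝ} {a : X}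

lemma eventually_closedBall_nhdsGT {P : Set X → Prop} (hP : ∀ᶠ s in (𝓝 a).smallSets, P s) :
    ∀ᶠ r in 𝓝[>] (0 : ℝ), P (Metric.closedBall a r) :=
  nhdsWithin_le_nhds (tendsto_closedBall_smallSets a hP)

variable [MeasurableSpace X] {μ : Measure X}

/-- `a` is a Lebesgue point of `f`: near `a` the function is integrable, and its mean oscillation
about the value `f a` on the closed balls centred at `a` tends to zero with the radius. -/
structure IsLebesguePoint (f : X → ℝ) (a : X) (μ : Measure X) : Prop where
  integrableAtFilter : IntegrableAtFilter f (𝓝 a) μ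
  tendsto_average : Tendsto (fun r => ⨍ y in Metric.closedBall a r, ‖f y - f a‖ ∂μ) (𝓝[>] 0) (𝓝 0)

variable [OpensMeasurableSpace X]

lemma IsLebesguePoint.congr (hf : IsLebesguePoint f a μ) (hfg : f =ᶠ[𝓝 a] g) :
    IsLebesguePoint g a μ where
  integrableAtFilter := by
    obtain ⟨s, hs, hfs⟩ := hf.integrableAtFilter
    obtain ⟨U, hU, hUo, haU⟩ := eventually_nhds_iff.1 hfg
    exact ⟨U ∩ s, inter_mem (hUo.mem_nhds haU) hs, (hfs.mono_set Set.inter_subset_right).congr <|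
      (ae_restrict_of_forall_mem hUo.measurableSet hU).filter_mono
        (ae_mono (Measure.restrict_mono_set μ Set.inter_subset_left))⟩
  tendsto_average := by
    refine hf.tendsto_average.congr' ?_
    filter_upwards [eventually_closedBall_nhdsGT (eventually_smallSets_forall.2 hfg)] with r hr
    exact setAverage_congr_fun measurableSet_closedBall
      (Eventually.of_forall fun y hy => by rw [hr y hy, hfg.self_of_nhds])

lemma isLebesguePoint_of_continuousAt [IsLocallyFiniteMeasure μ] (hg : ContinuousAt g a)
    (hgm : StronglyMeasurableAtFilter g (𝓝 a) μ) : IsLebesguePoint g a μ where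
  integrableAtFilter := hg.tendsto.integrableAtFilter hgm (μ.finiteAt_nhds a)
  tendsto_average := by
    rw [Metric.tendsto_nhds]
    intro η hη
    have hclose : ∀ᶠ y in 𝓝 a, ‖g y - g a‖ ≤ η / 2 :=
      (Metric.tendsto_nhds.1 hg.tendsto (η / 2) (half_pos hη)).mono fun y hy =>
        (dist_eq_norm (g y) (g a)) ▸ hy.le
    filter_upwards [eventually_closedBall_nhdsGT (eventually_smallSets_forall.2 hclose),
      eventually_closedBall_nhdsGT (μ.finiteAt_nhds a).eventually] with r hr hfin
    have hle : ‖∫ y in Metric.closedBall a r, ‖g y - g a‖ ∂μ‖ ≤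
        η / 2 * μ.real (Metric.closedBall a r) :=
      norm_setIntegral_le_of_norm_le_const hfin fun y hy => by simpa using hr y hy
    rw [dist_zero_right, setAverage_eq, norm_smul, norm_inv, Real.norm_of_nonneg measureReal_nonneg]
    refine lt_of_le_of_lt ?_ (half_lt_self hη)
    rw [inv_mul_eq_div]
    exact div_le_of_le_mul₀ measureReal_nonneg (half_pos hη).le hle

lemma integrableAtFilter_mul_of_continuousAt (hf : IntegrableAtFilter f (𝓝 a) μ)
    (hg : ContinuousAt g a) (hgm : StronglyMeasurableAtFilter g (𝓝 a) μ) :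
    IntegrableAtFilter (fun y => f y * g y) (𝓝 a) μ := by
  obtain ⟨s, hs, hfs⟩ := hf
  obtain ⟨t, ht, hgt⟩ := hgm
  obtain ⟨U, hU, hUo, haU⟩ :=
    eventually_nhds_iff.1 (hg.norm.tendsto.eventually_lt_const (lt_add_one ‖g a‖))
  refine ⟨U ∩ (s ∩ t), inter_mem (hUo.mem_nhds haU) (inter_mem hs ht), ?_⟩
  have hbdd : ∀ᵐ y ∂μ.restrict (U ∩ (s ∩ t)), ‖g y‖ ≤ ‖g a‖ + 1 :=
    ae_restrict_of_ae_restrict_of_subset Set.inter_subset_left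
      (ae_restrict_of_forall_mem hUo.measurableSet fun y hy => (hU y hy).le)
  exact (hfs.mono_set fun y hy => hy.2.1).mul_bdd
    (hgt.mono_measure (Measure.restrict_mono_set μ fun y hy => hy.2.2)) hbdd

lemma IsLebesguePoint.mul_continuousAt [IsLocallyFiniteMeasure μ] (hf : IsLebesguePoint f a μ)
    (hg : ContinuousAt g a) (hgm : StronglyMeasurableAtFilter g (𝓝 a) μ) :
    IsLebesguePoint (fun y => f y * g y) a μ := by
  have hg' := isLebesguePoint_of_continuousAt hg hgm
  have hfg := integrableAtFilter_mul_of_continuousAt hf.integrableAtFilter hg hgm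
  have hbdd : ∀ᶠ y in 𝓝 a, ‖g y‖ ≤ ‖g a‖ + 1 :=
    (hg.norm.tendsto.eventually_lt_const (lt_add_one ‖g a‖)).mono fun y hy => hy.le
  have hlim : Tendsto (fun r => (‖g a‖ + 1) * ⨍ y in Metric.closedBall a r, ‖f y - f a‖ ∂μ +
      ‖f a‖ * ⨍ y in Metric.closedBall a r, ‖g y - g a‖ ∂μ) (𝓝[>] 0) (𝓝 0) := by
    simpa only [mul_zero, add_zero] using
      (hf.tendsto_average.const_mul (‖g a‖ + 1)).add (hg'.tendsto_average.const_mul ‖f a‖)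
  refine ⟨hfg, squeeze_zero' (Eventually.of_forall fun r => ?_) ?_ hlim⟩
  · rw [setAverage_eq]
    positivity
  filter_upwards [eventually_closedBall_nhdsGT (eventually_smallSets_forall.2 hbdd),
    eventually_closedBall_nhdsGT hf.integrableAtFilter.eventually,
    eventually_closedBall_nhdsGT hg'.integrableAtFilter.eventually,
    eventually_closedBall_nhdsGT hfg.eventually,
    eventually_closedBall_nhdsGT (μ.finiteAt_nhds a).eventually] with r hr hfr hgr hfgr hfin
  have hosc {h : X → ℝ} (hh : IntegrableOn h (Metric.closedBall a r) μ) :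
      IntegrableOn (fun y => ‖h y - h a‖) (Metric.closedBall a r) μ :=
    (hh.sub (integrableOn_const hfin.ne)).norm
  have hle : ∫ y in Metric.closedBall a r, ‖f y * g y - f a * g a‖ ∂μ ≤
      (‖g a‖ + 1) * ∫ y in Metric.closedBall a r, ‖f y - f a‖ ∂μ +
        ‖f a‖ * ∫ y in Metric.closedBall a r, ‖g y - g a‖ ∂μ := by
    rw [← integral_const_mul, ← integral_const_mul,
      ← integral_add ((hosc hfr).const_mul _) ((hosc hgr).const_mul _)]
    refine setIntegral_mono_on (hosc hfgr) (((hosc hfr).const_mul _).add ((hosc hgr).const_mul _))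
      measurableSet_closedBall fun y hy => ?_
    calc ‖f y * g y - f a * g a‖ = ‖g y * (f y - f a) + f a * (g y - g a)‖ := by ring_nf
      _ ≤ ‖g y‖ * ‖f y - f a‖ + ‖f a‖ * ‖g y - g a‖ := by
        simpa only [norm_mul] using norm_add_le (g y * (f y - f a)) (f a * (g y - g a))
      _ ≤ (‖g a‖ + 1) * ‖f y - f a‖ + ‖f a‖ * ‖g y - g a‖ := by
        gcongr
        exact hr y hy
  simp only [setAverage_eq, smul_eq_mul]
  refine (mul_le_mul_of_nonneg_left hle (inv_nonneg.2 measureReal_nonneg)).trans_eq ?_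
  ring

end LebesguePoint

lemma ae_isLebesguePoint {X : Type*} [MetricSpace X] [SecondCountableTopology X]
    [MeasurableSpace X] [BorelSpace X] {μ : Measure X} [IsLocallyFiniteMeasure μ]
    [IsUnifLocDoublingMeasure μ] {f : X → ℝ} {U : Set X} (hU : IsOpen U) (hf : IntegrableOn f U μ) :
    ∀ᵐ a ∂μ, a ∈ U → IsLebesguePoint f a μ := by
  have hint : Integrable (U.indicator f) μ := hf.integrable_indicator hU.measurableSet
  filter_upwards [IsUnifLocDoublingMeasure.ae_tendsto_average_norm_sub μ hint.locallyIntegrable 1]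
    with a hlim ha
  have hind : IsLebesguePoint (U.indicator f) a μ :=
    { integrableAtFilter := hint.integrableAtFilter _
      tendsto_average := hlim (fun _ => a) id tendsto_id <|
        eventually_nhdsWithin_of_forall fun r hr =>
          Metric.mem_closedBall_self (by simpa using hr.le) }
  exact hind.congr ((hU.eventually_mem ha).mono fun y hy => Set.indicator_of_mem hy f)

section LogKernel

variable {φ : ℝ → ℝ} {ε : ℝ}

/-- The profile `φ`, rescaled to width `ε` and centred at `log a` in the variable `log y`, written
as a density in `y`; it vanishes for `y ≤ 0`. -/
def logKernel (φ : ℝ → ℝ) (ε a y : ℝ) : ℝ :=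
  if 0 < y then ε⁻¹ * φ ((Real.log y - Real.log a) / ε) / y else 0

lemma measurable_logKernel (hφ : Measurable φ) (ε a : ℝ) : Measurable (logKernel φ ε a) :=
  Measurable.ite measurableSet_Ioi (by fun_prop) measurable_const

lemma logKernel_nonneg (hφ : ∀ x, 0 ≤ φ x) (hε : 0 ≤ ε) (a y : ℝ) : 0 ≤ logKernel φ ε a y := by
  unfold logKernel
  have := hφ ((Real.log y - Real.log a) / ε)
  split_ifs <;> positivity

lemma integral_logKernel (hφ : ∫ x, φ x = 1) (hε : 0 < ε) (a : ℝ) :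
    ∫ y, logKernel φ ε a y = 1 := by
  have hpos : ∫ y in Set.Ioi 0, logKernel φ ε a y = ∫ y, logKernel φ ε a y :=
    setIntegral_eq_integral_of_forall_compl_eq_zero fun y hy => if_neg hy
  have hexp (x : ℝ) :
      |Real.exp x| • logKernel φ ε a (Real.exp x) = ε⁻¹ * φ ((x - Real.log a) / ε) := by
    have := Real.exp_pos x
    rw [logKernel, if_pos this, abs_of_pos this, Real.log_exp, smul_eq_mul]
    field_simp
  rw [← hpos, ← Real.range_exp, ← Set.image_univ,
    integral_image_eq_integral_abs_deriv_smul MeasurableSet.univ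
      (fun x _ => (Real.hasDerivAt_exp x).hasDerivWithinAt) Real.exp_injective.injOn,
    setIntegral_univ]
  simp only [hexp]
  rw [integral_const_mul, integral_sub_right_eq_self (fun x => φ (x / ε)),
    Measure.integral_comp_div φ, hφ, abs_of_pos hε, smul_eq_mul, mul_one, inv_mul_cancel₀ hε.ne']

lemma pos_and_abs_log_sub_log_le_of_logKernel_ne_zero (hφ : ∀ x, 1 ≤ |x| → φ x = 0) (hε : 0 < ε)
    {a y : ℝ} (h : logKernel φ ε a y ≠ 0) : 0 < y ∧ |Real.log y - Real.log a| ≤ ε := by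
  unfold logKernel at h
  split_ifs at h with hy
  · refine ⟨hy, not_lt.1 fun hlt => h ?_⟩
    rw [hφ _ (by rw [abs_div, abs_of_pos hε, one_le_div hε]; exact hlt.le), mul_zero, zero_div]
  · exact absurd rfl h

lemma abs_sub_le_of_logKernel_ne_zero (hφ : ∀ x, 1 ≤ |x| → φ x = 0) (hε : 0 < ε) (hε1 : ε ≤ 1)
    {a y : ℝ} (ha : 0 < a) (h : logKernel φ ε a y ≠ 0) : |y - a| ≤ 2 * a * ε := by
  obtain ⟨hy, hlog⟩ := pos_and_abs_log_sub_log_le_of_logKernel_ne_zero hφ hε h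
  have hdiff : y - a = a * (Real.exp (Real.log y - Real.log a) - 1) := by
    rw [Real.exp_sub, Real.exp_log hy, Real.exp_log ha]
    field_simp
  calc |y - a| = a * |Real.exp (Real.log y - Real.log a) - 1| := by
        rw [hdiff, abs_mul, abs_of_pos ha]
    _ ≤ a * (2 * |Real.log y - Real.log a|) := by
        gcongr
        exact Real.abs_exp_sub_one_le (hlog.trans hε1)
    _ ≤ a * (2 * ε) := by gcongr
    _ = 2 * a * ε := by ring

lemma logKernel_le (hφ : ∀ x, 1 ≤ |x| → φ x = 0) {C : ℝ} (hC0 : 0 ≤ C) (hC : ∀ x, φ x ≤ C)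
    (hε : 0 < ε) (hε1 : ε ≤ 1) {a : ℝ} (ha : 0 < a) (y : ℝ) :
    logKernel φ ε a y ≤ C * Real.exp 1 / a * ε⁻¹ := by
  by_cases h : logKernel φ ε a y = 0
  · rw [h]
    positivity
  obtain ⟨hy, hlog⟩ := pos_and_abs_log_sub_log_le_of_logKernel_ne_zero hφ hε h
  have hay : a ≤ y * Real.exp 1 := by
    rw [← Real.log_le_log_iff ha (by positivity), Real.log_mul hy.ne' (Real.exp_ne_zero _),
      Real.log_exp]
    linarith [(abs_le.1 hlog).1]
  rw [logKernel, if_pos hy, div_le_iff₀ hy]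
  calc ε⁻¹ * φ ((Real.log y - Real.log a) / ε) ≤ ε⁻¹ * C := by gcongr; exact hC _
    _ = C / a * ε⁻¹ * a := by field_simp
    _ ≤ C / a * ε⁻¹ * (y * Real.exp 1) := by gcongr
    _ = C * Real.exp 1 / a * ε⁻¹ * y := by ring

variable {ι : Type*} [Fintype ι] {a : ι → ℝ} {f : (ι → ℝ) → ℝ}

lemma support_prod_logKernel_subset (hφ : ∀ x, 1 ≤ |x| → φ x = 0) (hε : 0 < ε) (hε1 : ε ≤ 1)
    (ha : ∀ c, 0 < a c) :
    (Function.support fun y : ι → ℝ => ∏ c, logKernel φ ε (a c) (y c)) ⊆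
      Metric.closedBall a (2 * (‖a‖ + 1) * ε) := fun y hy => by
  rw [mem_closedBall_iff_norm, pi_norm_le_iff_of_nonneg (by positivity)]
  intro c
  refine (abs_sub_le_of_logKernel_ne_zero hφ hε hε1 (ha c)
    (Finset.prod_ne_zero_iff.1 hy c (Finset.mem_univ c))).trans ?_
  have := (le_abs_self _).trans (norm_le_pi_norm a c)
  gcongr
  linarith

lemma abs_prod_logKernel_le (hφ : IsBumpProfile φ) {C : ℝ} (hC : ∀ x, φ x ≤ C) (hε : 0 < ε)
    (hε1 : ε ≤ 1) (ha : ∀ c, 0 < a c) (y : ι → ℝ) :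
    |∏ c, logKernel φ ε (a c) (y c)| ≤
      ((4 * (‖a‖ + 1)) ^ Fintype.card ι * ∏ c, C * Real.exp 1 / a c) /
        volume.real (Metric.closedBall a (2 * (‖a‖ + 1) * ε)) := by
  have hnonneg (c : ι) := logKernel_nonneg hφ.nonneg hε.le (a c) (y c)
  rw [abs_of_nonneg (Finset.prod_nonneg fun c _ => hnonneg c), measureReal_def,
    Real.volume_pi_closedBall a (by positivity), ENNReal.toReal_ofReal (by positivity),
    show 2 * (2 * (‖a‖ + 1) * ε) = 4 * (‖a‖ + 1) * ε by ring,
    mul_pow (4 * (‖a‖ + 1)) ε, mul_div_mul_left _ _ (by positivity)]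
  calc ∏ c, logKernel φ ε (a c) (y c) ≤ ∏ c, C * Real.exp 1 / a c * ε⁻¹ :=
        Finset.prod_le_prod (fun c _ => hnonneg c) fun c _ => logKernel_le
          (fun _ => hφ.eq_zero_of_one_le_abs) ((hφ.nonneg 0).trans (hC 0)) hC hε hε1 (ha c) _
    _ = (∏ c, C * Real.exp 1 / a c) / ε ^ Fintype.card ι := by
        rw [Finset.prod_mul_distrib, Finset.prod_const, Finset.card_univ, inv_pow, div_eq_mul_inv]

lemma tendsto_integral_prod_logKernel_mul (hφ : IsBumpProfile φ) (ha : ∀ c, 0 < a c)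
    (hf : IsLebesguePoint f a volume) :
    (∀ᶠ ε in 𝓝[>] (0 : ℝ), Integrable fun y => (∏ c, logKernel φ ε (a c) (y c)) * f y) ∧
      Tendsto (fun ε => ∫ y, (∏ c, logKernel φ ε (a c) (y c)) * f y) (𝓝[>] 0) (𝓝 (f a)) := by
  obtain ⟨C, hC⟩ := hφ.continuous.bddAbove_range_of_hasCompactSupport hφ.hasCompactSupport
  replace hC (x : ℝ) : φ x ≤ C := hC (Set.mem_range_self x)
  have hsmall : ∀ᶠ ε in 𝓝[>] (0 : ℝ), 0 < ε ∧ ε ≤ 1 := Ioc_mem_nhdsGT one_pos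
  have hradius : Tendsto (fun ε : ℝ => 2 * (‖a‖ + 1) * ε) (𝓝[>] 0) (𝓝[>] 0) :=
    tendsto_nhdsWithin_iff.2
      ⟨(Continuous.tendsto' (by fun_prop) _ _ (mul_zero _)).mono_left nhdsWithin_le_nhds,
        hsmall.mono fun ε hε => mul_pos (by positivity) hε.1⟩
  have hfint := hradius.eventually (eventually_closedBall_nhdsGT hf.integrableAtFilter.eventually)
  have hbound := hsmall.mono fun ε hε => abs_prod_logKernel_le hφ hC hε.1 hε.2 ha
  have hsupp := hsmall.mono fun ε hε =>
    support_prod_logKernel_subset (fun _ => hφ.eq_zero_of_one_le_abs) hε.1 hε.2 ha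
  refine ⟨?_, tendsto_integral_smul_of_tendsto_average_norm_sub _
    (hf.tendsto_average.comp hradius) hfint ?_ hsupp hbound⟩
  · filter_upwards [hfint, hbound, hsupp] with ε hfε hbε hsε
    refine (integrableOn_iff_integrable_of_support_subset
      ((Function.support_mul_subset_left _ _).trans hsε)).1 (hfε.bdd_mul ?_ (.of_forall hbε))
    exact (Finset.measurable_fun_prod _ fun c _ => (measurable_logKernel
      hφ.continuous.measurable ε (a c)).comp (measurable_pi_apply c)).aestronglyMeasurable
  · refine tendsto_const_nhds.congr' ?_
    filter_upwards [self_mem_nhdsWithin] with ε hε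
    rw [integral_fintype_prod_volume_eq_prod (fun c => logKernel φ ε (a c))]
    simp [integral_logKernel hφ.integral_eq_one hε]

/-- The product of the kernels `logKernel φ ε (a c)` tilted by the factors
`(y c / a c) ^ (e c + 1)`, which are `1` at `y = a`. -/
def tiltedLogKernel (φ : ℝ → ℝ) (ε : ℝ) (e a y : ι → ℝ) : ℝ :=
  ∏ c, logKernel φ ε (a c) (y c) * Real.exp ((e c + 1) * (Real.log (y c) - Real.log (a c)))

lemma tiltedLogKernel_eq_zero {e y : ι → ℝ} (hy : ¬∀ c, 0 < y c) :
    tiltedLogKernel φ ε e a y = 0 := by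
  obtain ⟨c, hc⟩ := not_forall.1 hy
  exact Finset.prod_eq_zero (Finset.mem_univ c) (by rw [logKernel, if_neg hc, zero_mul])

lemma tendsto_integral_mul_tiltedLogKernel (hφ : IsBumpProfile φ) (ha : ∀ c, 0 < a c)
    (hf : IsLebesguePoint f a volume) (e : ι → ℝ) :
    (∀ᶠ ε in 𝓝[>] (0 : ℝ), Integrable fun y => f y * tiltedLogKernel φ ε e a y) ∧
      Tendsto (fun ε => ∫ y, f y * tiltedLogKernel φ ε e a y) (𝓝[>] 0) (𝓝 (f a)) := by
  set tilt : (ι → ℝ) → ℝ := fun y => ∏ c, Real.exp ((e c + 1) * (Real.log (y c) - Real.log (a c)))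
  have htilt : ContinuousAt tilt a := tendsto_finsetProd _ fun c _ =>
    (continuousAt_const.mul (((continuousAt_apply c a).log (ha c).ne').sub continuousAt_const)).rexp
  have hmeas : Measurable tilt := by fun_prop
  have htilt_self : f a * tilt a = f a := by simp [tilt]
  have h := tendsto_integral_prod_logKernel_mul hφ ha (hf.mul_continuousAt htilt
    (hmeas.aestronglyMeasurable.stronglyMeasurableAtFilter))
  simpa only [tiltedLogKernel, Finset.prod_mul_distrib, htilt_self, tilt, mul_left_comm] using h

end LogKernel

section Inversion

variable {n : ℕ} {φ : ℝ → ℝ} {ε : ℝ}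

lemma integrable_cosTransform_mul_exp (hζ : Integrable (cosTransform φ)) (hε : ε ≠ 0) (y : ℝ) :
    Integrable fun s : ℝ => (cosTransform φ (ε * s) : ℂ) * Complex.exp (Complex.I * s * y) := by
  refine (hζ.comp_mul_left' hε).ofReal.mul_bdd (c := 1) (by fun_prop) (.of_forall fun s => ?_)
  rw [show Complex.I * s * y = ((s * y : ℝ) : ℂ) * Complex.I by push_cast; ring,
    Complex.norm_exp_ofReal_mul_I]

lemma cosTransform_mul_exp_mul_exp (x e u v : ℝ) (s : ℝ) :
    (x : ℂ) * Complex.exp ((e + Complex.I * s) * u) * Complex.exp ((-(e + Complex.I * s) - 1) * v) =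
      (Real.exp (e * u - (e + 1) * v) : ℂ) *
        (x * Complex.exp (Complex.I * s * ((u - v : ℝ) : ℂ))) := by
  rw [mul_assoc, ← Complex.exp_add, Complex.ofReal_exp, mul_left_comm, ← Complex.exp_add]
  push_cast
  ring_nf

lemma integral_cosTransform_mul_exp_mul_exp (hφ : IsBumpProfile φ)
    (hζ : Integrable (cosTransform φ)) (hε : 0 < ε) (e a : ℝ) {y : ℝ} (hy : 0 < y) :
    ∫ s : ℝ, (cosTransform φ (ε * s) : ℂ) * Complex.exp ((e + Complex.I * s) * Real.log y) *
        Complex.exp ((-(e + Complex.I * s) - 1) * Real.log a) =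
      2 * π * ((logKernel φ ε a y * Real.exp ((e + 1) * (Real.log y - Real.log a)) : ℝ) : ℂ) := by
  have hexp : Real.exp (e * Real.log y - (e + 1) * Real.log a) =
      Real.exp ((e + 1) * (Real.log y - Real.log a)) / y := by
    rw [eq_div_iff hy.ne']
    nth_rewrite 2 [← Real.exp_log hy]
    rw [← Real.exp_add]
    ring_nf
  simp only [cosTransform_mul_exp_mul_exp]
  rw [integral_const_mul, integral_cosTransform_comp_mul_mul_exp hφ.continuous hφ.integrable
    hφ.even hζ hε, hexp, logKernel, if_pos hy]
  push_cast
  ring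

lemma integral_expDet_mul_prod_mul_expDet (hφ : IsBumpProfile φ)
    (hζ : Integrable (cosTransform φ)) (hε : 0 < ε) (e a : Fin n → ℝ) {y : Fin n → ℝ}
    (hy : ∀ c, 0 < y c) :
    ∫ t : Fin n → ℝ, expDet (linePoint e t) (Real.log ∘ y) *
        (∏ l, (cosTransform φ (ε * t l) : ℂ)) *
          expDet (fun k => -linePoint e t k - 1) (Real.log ∘ a) =
      (2 * π) ^ n * ((∑ ρ : Equiv.Perm (Fin n), ∑ τ : Equiv.Perm (Fin n),
        (Equiv.Perm.sign ρ : ℤ) * (Equiv.Perm.sign τ : ℤ) *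
          tiltedLogKernel φ ε e (a ∘ τ) (y ∘ ρ) : ℝ) : ℂ) := by
  set f : Fin n → Fin n → ℝ → ℂ := fun i j s =>
    (cosTransform φ (ε * s) : ℂ) * Complex.exp ((e j + Complex.I * s) * Real.log (y i))
  set g : Fin n → Fin n → ℝ → ℂ := fun i j s =>
    Complex.exp ((-(e j + Complex.I * s) - 1) * Real.log (a i))
  have hf (t : Fin n → ℝ) : expDet (linePoint e t) (Real.log ∘ y) *
      ∏ l, (cosTransform φ (ε * t l) : ℂ) = (Matrix.of fun i j => f i j (t j)).det := by
    rw [expDet, ← det_transpose, mul_comm, ← det_mul_row]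
    rfl
  have hg (t : Fin n → ℝ) : expDet (fun k => -linePoint e t k - 1) (Real.log ∘ a) =
      (Matrix.of fun i j => g i j (t j)).det := by
    rw [expDet, ← det_transpose]
    rfl
  have hfg (i k j : Fin n) : Integrable fun s => f i j s * g k j s := by
    simp only [f, g, cosTransform_mul_exp_mul_exp]
    exact (integrable_cosTransform_mul_exp hζ hε.ne' _).const_mul _
  simp only [hf, hg]
  rw [volume_pi, integral_det_mul_det_pi hfg, Complex.ofReal_sum, Finset.mul_sum]
  refine Finset.sum_congr rfl fun ρ _ => ?_
  rw [Complex.ofReal_sum, Finset.mul_sum]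
  refine Finset.sum_congr rfl fun τ _ => ?_
  simp only [f, g, integral_cosTransform_mul_exp_mul_exp hφ hζ hε _ _ (hy _)]
  rw [Finset.prod_mul_distrib, Finset.prod_const, Finset.card_univ, Fintype.card_fin,
    ← Complex.ofReal_prod]
  push_cast [tiltedLogKernel, Function.comp_apply]
  ring

lemma integrable_vdm_linePoint_mul_prod {ζ : ℝ → ℝ} (hζ : ∀ k < n, Integrable fun z => z ^ k * ζ z)
    (hε : ε ≠ 0) (e : Fin n → ℝ) :
    Integrable fun t : Fin n → ℝ => vdm (linePoint e t) * ∏ l, (ζ (ε * t l) : ℂ) := by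
  refine (integrable_det_pi (f := fun (i j : Fin n) (s : ℝ) =>
    (ζ (ε * s) : ℂ) * (e j + Complex.I * s) ^ (i : ℕ)) fun i j => ?_).congr
      (.of_forall fun t => ?_)
  · simpa only [mul_comm] using integrable_affine_pow_mul_comp_mul hζ hε (e j) i.2
  · simp only
    rw [vdm_eq_det_vandermonde, ← det_transpose (vandermonde _), mul_comm (det _), ← det_mul_row]
    rfl

lemma integrable_prod_expDet_inversion {ζ : ℝ → ℝ} (hζc : Continuous ζ)
    (hζ : ∀ k < n, Integrable fun z => z ^ k * ζ z) (hε : ε ≠ 0) {e : Fin n → ℝ} (he : vdm e ≠ 0)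
    {ν : Measure (Fin n → ℝ)} [SFinite ν] {q : (Fin n → ℝ) → ℝ} (hqm : AEStronglyMeasurable q ν)
    (hq : Integrable (fun y => q y * ‖expDet (fun k => (e k : ℂ)) (Real.log ∘ y)‖) ν)
    (v : Fin n → ℝ) :
    Integrable (Function.uncurry fun t y : Fin n → ℝ => (q y : ℂ) *
      (expDet (linePoint e t) (Real.log ∘ y) * (∏ l, (ζ (ε * t l) : ℂ)) *
        expDet (fun k => -linePoint e t k - 1) v)) (volume.prod ν) := by
  set K : ℝ := ∑ σ : Equiv.Perm (Fin n), ∏ c, Real.exp ((-e (σ c) - 1) * v c)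
  have hK (t : Fin n → ℝ) : ‖expDet (fun k => -linePoint e t k - 1) v‖ ≤ K :=
    (norm_expDet_le _ _).trans_eq (by simp [linePoint_re, K])
  have hdom := ((integrable_vdm_linePoint_mul_prod hζ hε e).norm.mul_prod hq.norm).const_mul
    (K * |vdm e|⁻¹)
  refine hdom.mono' ?_ (.of_forall fun ⟨t, y⟩ => ?_)
  · have hlog : Measurable fun z : (Fin n → ℝ) × (Fin n → ℝ) => Real.log ∘ z.2 :=
      measurable_pi_lambda _ fun c => by simp only [Function.comp_apply]; fun_prop
    have hline := continuous_linePoint e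
    have hdet : Measurable fun z : (Fin n → ℝ) × (Fin n → ℝ) =>
        expDet (linePoint e z.1) (Real.log ∘ z.2) :=
      continuous_expDet.measurable.comp ((hline.measurable.comp measurable_fst).prodMk hlog)
    have hdet' : Continuous fun z : (Fin n → ℝ) × (Fin n → ℝ) =>
        expDet (fun k => -linePoint e z.1 k - 1) v :=
      continuous_expDet.comp (.prodMk (continuous_pi fun k => by fun_prop) continuous_const)
    have hprod : Continuous fun z : (Fin n → ℝ) × (Fin n → ℝ) => ∏ l, (ζ (ε * z.1 l) : ℂ) := by
      fun_prop
    exact (Complex.continuous_ofReal.comp_aestronglyMeasurable hqm.comp_snd).mul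
      ((hdet.mul hprod.measurable).mul hdet'.measurable).aestronglyMeasurable
  · have hvdm : 0 < |vdm e| := abs_pos.2 he
    have hline := norm_expDet_linePoint_mul_le e t (Real.log ∘ y)
    rw [← le_div_iff₀ hvdm] at hline
    simp only [Function.uncurry_apply_pair, norm_mul, Complex.norm_real, norm_norm]
    calc ‖q y‖ * (‖expDet (linePoint e t) (Real.log ∘ y)‖ * ‖∏ l, (ζ (ε * t l) : ℂ)‖ *
          ‖expDet (fun k => -linePoint e t k - 1) v‖)
        ≤ ‖q y‖ * (‖vdm (linePoint e t)‖ * ‖expDet (fun k => (e k : ℂ)) (Real.log ∘ y)‖ / |vdm e| *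
          ‖∏ l, (ζ (ε * t l) : ℂ)‖ * K) := by gcongr; exact hK t
      _ = _ := by ring

/-- The open orthant `(0, ∞)ⁿ` of points with positive coordinates. -/
abbrev posOrthant (n : ℕ) : Set (Fin n → ℝ) := {a | ∀ j, 0 < a j}

lemma isOpen_posOrthant (n : ℕ) : IsOpen (posOrthant n) := by
  simpa only [Set.ofPred_forall] using
    isOpen_iInter_of_finite fun j =>
      isOpen_lt continuous_const (continuous_apply (A := fun _ => ℝ) j)

lemma measurePreserving_comp_perm {ι : Type*} [Fintype ι] (σ : Equiv.Perm ι) :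
    MeasurePreserving (MeasurableEquiv.arrowCongr' σ.symm (MeasurableEquiv.refl ℝ)) :=
  volume_preserving_arrowCongr' _ _ (MeasurePreserving.id _)

lemma tiltedLogKernel_comp_perm {ι : Type*} [Fintype ι] (e a y : ι → ℝ) (σ : Equiv.Perm ι) :
    tiltedLogKernel φ ε e (a ∘ σ) (y ∘ σ) = tiltedLogKernel φ ε (e ∘ σ.symm) a y := by
  rw [tiltedLogKernel, tiltedLogKernel,
    ← Equiv.prod_comp σ fun c => logKernel φ ε (a c) (y c) *
      Real.exp (((e ∘ σ.symm) c + 1) * (Real.log (y c) - Real.log (a c)))]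
  simp only [Function.comp_apply, Equiv.symm_apply_apply]

lemma sign_mul_sign_self {ι : Type*} [Fintype ι] [DecidableEq ι] (σ : Equiv.Perm ι) :
    ((Equiv.Perm.sign σ : ℤ) : ℝ) * (Equiv.Perm.sign σ : ℤ) = 1 := by
  rw [← Int.cast_mul, Int.units_coe_mul_self, Int.cast_one]

variable {q : (Fin n → ℝ) → ℝ} {a : Fin n → ℝ}

lemma antisymm_mul_tiltedLogKernel_comp_perm
    (hanti : ∀ (σ : Equiv.Perm (Fin n)) y, q (y ∘ σ) = (Equiv.Perm.sign σ : ℤ) * q y)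
    (e a y : Fin n → ℝ) (ρ τ : Equiv.Perm (Fin n)) :
    (Equiv.Perm.sign ρ : ℤ) * (Equiv.Perm.sign τ : ℤ) *
        (q (y ∘ ⇑(τ * ρ⁻¹)) * tiltedLogKernel φ ε e (a ∘ τ) ((y ∘ ⇑(τ * ρ⁻¹)) ∘ ρ)) =
      q y * tiltedLogKernel φ ε (e ∘ τ.symm) a y := by
  have hy : (y ∘ ⇑(τ * ρ⁻¹)) ∘ ρ = y ∘ τ := by
    ext c
    simp
  rw [hy, tiltedLogKernel_comp_perm, hanti]
  simp only [Equiv.Perm.sign_mul, Equiv.Perm.sign_inv, Units.val_mul, Int.cast_mul]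
  set X := q y * tiltedLogKernel φ ε (e ∘ τ.symm) a y
  linear_combination X * (Equiv.Perm.sign τ : ℤ) * (Equiv.Perm.sign τ : ℤ) * sign_mul_sign_self ρ +
    X * sign_mul_sign_self τ

lemma tendsto_sum_integral_mul_tiltedLogKernel (hφ : IsBumpProfile φ) (ha : ∀ c, 0 < a c)
    (hf : IsLebesguePoint q a volume)
    (hanti : ∀ (σ : Equiv.Perm (Fin n)) y, q (y ∘ σ) = (Equiv.Perm.sign σ : ℤ) * q y)
    (e : Fin n → ℝ) :
    Tendsto (fun ε => ∫ y, q y * ∑ ρ : Equiv.Perm (Fin n), ∑ τ : Equiv.Perm (Fin n),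
      (Equiv.Perm.sign ρ : ℤ) * (Equiv.Perm.sign τ : ℤ) *
        tiltedLogKernel φ ε e (a ∘ τ) (y ∘ ρ)) (𝓝[>] 0) (𝓝 ((n.factorial : ℝ) ^ 2 * q a)) := by
  have hterm (τ : Equiv.Perm (Fin n)) := tendsto_integral_mul_tiltedLogKernel hφ ha hf (e ∘ τ.symm)
  have hlim : Tendsto (fun ε => ∑ _ρ : Equiv.Perm (Fin n), ∑ τ : Equiv.Perm (Fin n),
      ∫ y, q y * tiltedLogKernel φ ε (e ∘ τ.symm) a y) (𝓝[>] 0)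
        (𝓝 (∑ _ρ : Equiv.Perm (Fin n), ∑ _τ : Equiv.Perm (Fin n), q a)) :=
    tendsto_finsetSum _ fun _ _ => tendsto_finsetSum _ fun τ _ => (hterm τ).2
  have hsum : ∑ _ρ : Equiv.Perm (Fin n), ∑ _τ : Equiv.Perm (Fin n), q a =
      (n.factorial : ℝ) ^ 2 * q a := by
    simp [Fintype.card_perm, sq, mul_assoc]
  refine (hsum ▸ hlim).congr' ?_
  filter_upwards [eventually_all.2 fun τ => (hterm τ).1] with ε hint
  set F : Equiv.Perm (Fin n) → Equiv.Perm (Fin n) → (Fin n → ℝ) → ℝ := fun ρ τ y =>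
    (Equiv.Perm.sign ρ : ℤ) * (Equiv.Perm.sign τ : ℤ) *
      (q y * tiltedLogKernel φ ε e (a ∘ τ) (y ∘ ρ))
  have hF (ρ τ : Equiv.Perm (Fin n)) :
      F ρ τ ∘ MeasurableEquiv.arrowCongr' (τ * ρ⁻¹).symm (MeasurableEquiv.refl ℝ) =
        fun y => q y * tiltedLogKernel φ ε (e ∘ τ.symm) a y :=
    funext fun y => antisymm_mul_tiltedLogKernel_comp_perm hanti e a y ρ τ
  have hFint (ρ τ : Equiv.Perm (Fin n)) : Integrable (F ρ τ) :=
    ((measurePreserving_comp_perm (τ * ρ⁻¹)).integrable_comp_emb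
      (MeasurableEquiv.measurableEmbedding _)).1 (hF ρ τ ▸ hint τ)
  have hFintegral (ρ τ : Equiv.Perm (Fin n)) :
      ∫ y, F ρ τ y = ∫ y, q y * tiltedLogKernel φ ε (e ∘ τ.symm) a y := by
    rw [← (measurePreserving_comp_perm (τ * ρ⁻¹)).integral_comp', ← hF ρ τ]
    rfl
  simp only [Finset.mul_sum, mul_left_comm (q _)]
  rw [integral_finsetSum _ fun ρ _ => integrable_finsetSum _ fun τ _ => hFint ρ τ]
  refine Finset.sum_congr rfl fun ρ _ => ?_
  rw [integral_finsetSum _ fun τ _ => hFint ρ τ]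
  exact Finset.sum_congr rfl fun τ _ => (hFintegral ρ τ).symm

lemma integral_expDet_inversion (hφ : IsBumpProfile φ) (hn : 0 < n)
    (hζ : ∀ k < n, Integrable fun z => z ^ k * cosTransform φ z) (hε : 0 < ε) {e : Fin n → ℝ}
    (he : vdm e ≠ 0) (hqm : AEStronglyMeasurable q (volume.restrict (posOrthant n)))
    (hq : IntegrableOn (fun y => q y * ‖expDet (fun k => (e k : ℂ)) (Real.log ∘ y)‖)
      (posOrthant n)) (a : Fin n → ℝ) :
    ∫ t : Fin n → ℝ, (∫ y in posOrthant n, (q y : ℂ) * expDet (linePoint e t) (Real.log ∘ y)) *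
        (∏ l, (cosTransform φ (ε * t l) : ℂ)) *
          expDet (fun k => -linePoint e t k - 1) (Real.log ∘ a) =
      (2 * π) ^ n * ((∫ y, q y * ∑ ρ : Equiv.Perm (Fin n), ∑ τ : Equiv.Perm (Fin n),
        (Equiv.Perm.sign ρ : ℤ) * (Equiv.Perm.sign τ : ℤ) *
          tiltedLogKernel φ ε e (a ∘ τ) (y ∘ ρ) : ℝ) : ℂ) := by
  have hζ0 : Integrable (cosTransform φ) := by simpa only [pow_zero, one_mul] using hζ 0 hn
  have hvanish (y : Fin n → ℝ) (hy : y ∉ posOrthant n) :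
      (q y * ∑ ρ : Equiv.Perm (Fin n), ∑ τ : Equiv.Perm (Fin n),
        (Equiv.Perm.sign ρ : ℤ) * (Equiv.Perm.sign τ : ℤ) *
          tiltedLogKernel φ ε e (a ∘ τ) (y ∘ ρ) : ℝ) = 0 := by
    refine mul_eq_zero_of_right _ (Finset.sum_eq_zero fun ρ _ => Finset.sum_eq_zero fun τ _ => ?_)
    rw [tiltedLogKernel_eq_zero fun h => hy fun j => by simpa using h (ρ.symm j), mul_zero]
  rw [← setIntegral_eq_integral_of_forall_compl_eq_zero hvanish]
  have hfubini := integrable_prod_expDet_inversion (continuous_cosTransform hφ.integrable) hζ hε.ne'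
    he hqm hq (Real.log ∘ a)
  simp only [← integral_mul_const, mul_assoc (_ : ℂ)]
  simp only [← mul_assoc (expDet _ _)]
  rw [integral_integral_swap hfubini, ← integral_complex_ofReal, ← integral_const_mul]
  refine setIntegral_congr_fun (isOpen_posOrthant n).measurableSet fun y hy => ?_
  rw [integral_const_mul, integral_expDet_mul_prod_mul_expDet hφ hζ0 hε e a hy]
  push_cast
  ring

theorem tendsto_expDet_inversion (hφ : IsBumpProfile φ) (hn : 0 < n)
    (hζ : ∀ k < n, Integrable fun z => z ^ k * cosTransform φ z) {e : Fin n → ℝ}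
    (he : vdm e ≠ 0) (hqm : AEStronglyMeasurable q (volume.restrict (posOrthant n)))
    (hq : IntegrableOn (fun y => q y * ‖expDet (fun k => (e k : ℂ)) (Real.log ∘ y)‖)
      (posOrthant n))
    (hanti : ∀ (σ : Equiv.Perm (Fin n)) y, q (y ∘ σ) = (Equiv.Perm.sign σ : ℤ) * q y)
    (ha : ∀ c, 0 < a c) (hqa : IsLebesguePoint q a volume) :
    Tendsto (fun ε => ((2 * (π : ℂ)) ^ n)⁻¹ * ∫ t : Fin n → ℝ,
      (∫ y in posOrthant n, (q y : ℂ) * expDet (linePoint e t) (Real.log ∘ y)) *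
        (∏ l, (cosTransform φ (ε * t l) : ℂ)) *
          expDet (fun k => -linePoint e t k - 1) (Real.log ∘ a))
      (𝓝[>] 0) (𝓝 (((n.factorial : ℝ) ^ 2 * q a : ℝ) : ℂ)) := by
  refine ((Complex.continuous_ofReal.tendsto _).comp
    (tendsto_sum_integral_mul_tiltedLogKernel hφ ha hqa hanti e)).congr' ?_
  filter_upwards [self_mem_nhdsWithin] with ε hε
  rw [integral_expDet_inversion hφ hn hζ hε he hqm hq a, inv_mul_cancel_left₀ (by simp)]
  rfl

end Inversion

section SphericalTransform

variable {n : ℕ}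

/-- The exponents `2(n - 1), …, 2, 0`: the real parts of `σ(t)_j - n`, `j = 1, …, n`. -/
def evenExponent (b : Fin n) : ℝ := 2 * (b.rev : ℕ)

lemma ofReal_evenExponent (b : Fin n) : (evenExponent b : ℂ) = 2 * n - 2 * ((b : ℕ) + 1 : ℂ) := by
  rw [evenExponent, Fin.val_rev, Nat.cast_sub b.2]
  push_cast
  ring

lemma vdm_evenExponent_ne_zero : vdm (evenExponent : Fin n → ℝ) ≠ 0 :=
  vdm_ne_zero_iff.2 fun _ _ h =>
    Fin.rev_injective <| Fin.ext <| Nat.cast_injective <| mul_left_cancel₀ two_ne_zero h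

lemma sigC_eq (t : Fin n → ℝ) (b : Fin n) : sigC n t b = linePoint evenExponent t b + n := by
  rw [linePoint, ofReal_evenExponent, sigC]
  ring

lemma vdm_sigC_ne_zero (t : Fin n → ℝ) : vdm (sigC n t) ≠ 0 :=
  vdm_ne_zero_iff.2 fun i j h => vdm_ne_zero_iff.1 vdm_evenExponent_ne_zero <| by
    simpa only [sigC_eq, add_left_inj, linePoint_re] using
      congrArg Complex.re (add_right_cancel ((sigC_eq t i).symm.trans (h.trans (sigC_eq t j))))

lemma det_cpw_eq_expDet (z : Fin n → ℂ) {a : Fin n → ℝ} (ha : a ∈ posOrthant n) :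
    (Matrix.of fun b c : Fin n => cpw (a c) (z b)).det = expDet z (Real.log ∘ a) := by
  simp only [cpw, if_neg (ha _).ne']
  rfl

lemma det_cpw_inversion_eq_expDet (t : Fin n → ℝ) {a : Fin n → ℝ} (ha : a ∈ posOrthant n) :
    (Matrix.of fun b c : Fin n =>
      cpw (a c) (-Complex.I * (t b : ℂ) - 2 * (n : ℂ) + 2 * ((b : ℕ) + 1 : ℂ) - 1)).det =
      expDet (fun k => -linePoint evenExponent t k - 1) (Real.log ∘ a) := by
  rw [det_cpw_eq_expDet _ ha]
  congr with k
  rw [linePoint, ofReal_evenExponent]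
  ring

lemma prod_rpow_mul_det_cpw_sigC (t : Fin n → ℝ) {a : Fin n → ℝ} (ha : a ∈ posOrthant n) :
    (((∏ j, a j) ^ (-(2 * (n : ℝ) - 1)) : ℝ) : ℂ) *
        (Matrix.of fun b c : Fin n => cpw (a c) (sigC n t b + (n : ℂ) - 1)).det =
      expDet (linePoint evenExponent t) (Real.log ∘ a) := by
  have hprod : (((∏ j, a j) ^ (-(2 * (n : ℝ) - 1)) : ℝ) : ℂ) =
      ∏ c, Complex.exp (-(2 * n - 1) * (Real.log ∘ a) c) := by
    rw [← Real.finsetProd_rpow _ _ fun j _ => (ha j).le, Complex.ofReal_prod]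
    refine Finset.prod_congr rfl fun c _ => ?_
    rw [Real.rpow_def_of_pos (ha c)]
    push_cast [Function.comp_apply]
    ring_nf
  rw [det_cpw_eq_expDet _ ha, hprod, ← expDet_add_const]
  congr with k
  rw [sigC_eq]
  ring

lemma ShatP_mul_vdm_sigC (p : (Fin n → ℝ) → ℝ) (t : Fin n → ℝ) :
    ShatP n p t * vdm (sigC n t) = ((∏ j ∈ Finset.range n, 2 ^ j * Nat.factorial j : ℕ) : ℂ) *
      ∫ a in posOrthant n, ((p a * (vdm fun j => a j ^ 2)⁻¹ : ℝ) : ℂ) *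
        expDet (linePoint evenExponent t) (Real.log ∘ a) := by
  rw [ShatP, mul_assoc, ← integral_mul_const]
  congr 1
  refine setIntegral_congr_fun (isOpen_posOrthant n).measurableSet fun a ha => ?_
  have := vdm_sigC_ne_zero t
  rw [← prod_rpow_mul_det_cpw_sigC t ha]
  push_cast
  field_simp

lemma norm_expDet_evenExponent {a : Fin n → ℝ} (ha : a ∈ posOrthant n) :
    ‖expDet (fun k => (evenExponent k : ℂ)) (Real.log ∘ a)‖ = |vdm fun j => a j ^ 2| := by
  have hrev : (fun k : Fin n => (evenExponent k : ℂ)) =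
      (fun k : Fin n => ((2 : ℝ) : ℂ) * (k : ℕ)) ∘ Fin.revPerm := by
    ext k
    simp [evenExponent]
  have hexp (c : Fin n) : Complex.exp (((2 : ℝ) • (Real.log ∘ a)) c : ℝ) = ((a c ^ 2 : ℝ) : ℂ) := by
    rw [← Complex.ofReal_exp, Pi.smul_apply, smul_eq_mul, Function.comp_apply, ← Nat.cast_ofNat,
      Real.exp_nat_mul, Real.exp_log (ha c)]
  rw [hrev, expDet_comp_perm_left, norm_sign_mul, expDet_smul, expDet_natCast]
  simp only [hexp]
  rw [← Real.norm_eq_abs, ← Complex.norm_real]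
  simp [vdm]

lemma continuous_vdm_sq : Continuous fun a : Fin n → ℝ => vdm fun j => a j ^ 2 := by
  unfold vdm
  fun_prop

lemma ae_injective : ∀ᵐ a : Fin n → ℝ, Function.Injective a := by
  have hdiag (i j : Fin n) (hij : i ≠ j) : ∀ᵐ a : Fin n → ℝ, a i ≠ a j := by
    set W : Submodule ℝ (Fin n → ℝ) :=
      LinearMap.eqLocus (LinearMap.proj i : (Fin n → ℝ) →ₗ[ℝ] ℝ) (LinearMap.proj j)
    have hW : W ≠ ⊤ := fun h => by
      have hmem : (Pi.single i 1 : Fin n → ℝ) ∈ W := h ▸ Submodule.mem_top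
      simp [W, hij.symm] at hmem
    rw [ae_iff]
    simp only [not_not]
    exact Measure.addHaar_submodule volume W hW
  filter_upwards [ae_all_iff.2 fun i => ae_all_iff.2 fun j => ae_all_iff.2 (hdiag i j)] with a ha
  exact fun i j h => not_imp_not.1 (ha i j) h

variable {p : (Fin n → ℝ) → ℝ}

lemma div_vdm_sq_antisymm (hp : ∀ (e : Equiv.Perm (Fin n)) a, p (a ∘ e) = p a)
    (σ : Equiv.Perm (Fin n)) (y : Fin n → ℝ) :
    p (y ∘ σ) * (vdm fun j => (y ∘ σ) j ^ 2)⁻¹ =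
      (Equiv.Perm.sign σ : ℤ) * (p y * (vdm fun j => y j ^ 2)⁻¹) := by
  have hvdm : (vdm fun j => (y ∘ σ) j ^ 2) = (Equiv.Perm.sign σ : ℤ) * vdm fun j => y j ^ 2 :=
    vdm_comp_perm (fun j => y j ^ 2) σ
  rw [hp, hvdm, mul_inv, inv_eq_of_mul_eq_one_left (sign_mul_sign_self σ), mul_left_comm]

lemma aestronglyMeasurable_div_vdm_sq {μ : Measure (Fin n → ℝ)} (hp : AEStronglyMeasurable p μ) :
    AEStronglyMeasurable (fun y => p y * (vdm fun j => y j ^ 2)⁻¹) μ :=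
  hp.mul continuous_vdm_sq.measurable.inv.aestronglyMeasurable

lemma integrableOn_div_vdm_sq_mul_norm_expDet (hp : IntegrableOn p (posOrthant n)) :
    IntegrableOn (fun y => p y * (vdm fun j => y j ^ 2)⁻¹ *
      ‖expDet (fun k => (evenExponent k : ℂ)) (Real.log ∘ y)‖) (posOrthant n) := by
  have hmeas : Measurable fun y : Fin n → ℝ => (vdm fun j => y j ^ 2)⁻¹ * |vdm fun j => y j ^ 2| :=
    continuous_vdm_sq.measurable.inv.mul continuous_vdm_sq.abs.measurable
  refine IntegrableOn.congr_fun (hp.mul_bdd (c := 1) hmeas.aestronglyMeasurable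
    (.of_forall fun y => ?_)) (fun y hy => ?_) (isOpen_posOrthant n).measurableSet
  · rw [norm_mul, norm_inv, Real.norm_eq_abs, Real.norm_eq_abs, abs_abs]
    exact inv_mul_le_one
  · simp only [norm_expDet_evenExponent hy, mul_assoc]

lemma IsLebesguePoint.div_vdm_sq {a : Fin n → ℝ} (hp : IsLebesguePoint p a volume)
    (ha : (vdm fun j => a j ^ 2) ≠ 0) :
    IsLebesguePoint (fun y => p y * (vdm fun j => y j ^ 2)⁻¹) a volume :=
  hp.mul_continuousAt (continuous_vdm_sq.continuousAt.inv₀ ha)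
    continuous_vdm_sq.measurable.inv.stronglyMeasurable.stronglyMeasurableAtFilter

lemma vdm_sq_ne_zero {a : Fin n → ℝ} (hinj : Function.Injective a) (ha : a ∈ posOrthant n) :
    (vdm fun j => a j ^ 2) ≠ 0 :=
  vdm_ne_zero_iff.2 fun i j h => hinj ((pow_left_inj₀ (ha i).le (ha j).le two_ne_zero).1 h)

lemma integral_ShatP_inversion (p : (Fin n → ℝ) → ℝ) (ζ : ℝ → ℝ) (ε : ℝ) {a : Fin n → ℝ}
    (ha : a ∈ posOrthant n) :
    ∫ t : Fin n → ℝ, ShatP n p t * (∏ l, (ζ (ε * t l) : ℂ)) * vdm (sigC n t) *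
        (Matrix.of fun b c : Fin n => cpw (a c)
          (-Complex.I * (t b : ℂ) - 2 * (n : ℂ) + 2 * ((b : ℕ) + 1 : ℂ) - 1)).det =
      ((∏ j ∈ Finset.range n, 2 ^ j * Nat.factorial j : ℕ) : ℂ) * ∫ t : Fin n → ℝ,
        (∫ y in posOrthant n, ((p y * (vdm fun j => y j ^ 2)⁻¹ : ℝ) : ℂ) *
          expDet (linePoint evenExponent t) (Real.log ∘ y)) * (∏ l, (ζ (ε * t l) : ℂ)) *
            expDet (fun k => -linePoint evenExponent t k - 1) (Real.log ∘ a) := by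
  rw [← integral_const_mul]
  congr with t
  rw [mul_right_comm (ShatP n p t), ShatP_mul_vdm_sigC, det_cpw_inversion_eq_expDet t ha]
  simp only [mul_assoc]

end SphericalTransform

/-- Lemma 2.8: inversion of the spherical transform `S_Φ`:
for almost every `a ∈ (0,∞)ⁿ`,
`p(a) = Δ_n(a²)/((n!)²∏ 2^j j!) · lim_{ε→0⁺} (2π)^{-n} ∫_{ℝⁿ} Ŝp(σ(t)) ∏ ζ(ε t_l)
  Δ_n(σ(t)) det[a_c^{-i t_b-2n+2b-1}] dt`. -/
theorem spherical_transform_inversion (n : ℕ) (hn : 1 ≤ n)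
    (p : (Fin n → ℝ) → ℝ)
    (hpInt : IntegrableOn p {a : Fin n → ℝ | ∀ j, 0 < a j})
    (hpSym : ∀ (e : Equiv.Perm (Fin n)) (a : Fin n → ℝ), p (a ∘ e) = p a)
    (hconv : ∀ t : Fin n → ℝ, IntegrableOn
      (fun a : Fin n → ℝ =>
        ((p a * (∏ j, a j) ^ (-(2 * (n : ℝ) - 1)) : ℝ) : ℂ) *
          (Matrix.of fun b c : Fin n => cpw (a c) (sigC n t b + (n : ℂ) - 1)).det /
            (((vdm fun j => (a j) ^ 2 : ℝ) : ℂ) * vdm (sigC n t)))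
      {a : Fin n → ℝ | ∀ j, 0 < a j})
    (zeta : ℝ → ℝ) (hzc : Continuous zeta)
    (hzeq : ∀ z : ℝ, (∀ k ∈ Finset.range n, 4 * z ^ 2 ≠ (π * (2 * (k : ℝ) + 1)) ^ 2) →
      zeta z = Real.cos z /
        ∏ k ∈ Finset.range n, (1 - 4 * z ^ 2 / (π * (2 * (k : ℝ) + 1)) ^ 2)) :
    ∀ᵐ a : Fin n → ℝ, (∀ j, 0 < a j) →
      Tendsto
        (fun ε : ℝ =>
          (((vdm fun j => (a j) ^ 2 : ℝ) /
              ((Nat.factorial n : ℝ) ^ 2 *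
                (∏ j ∈ Finset.range n, 2 ^ j * Nat.factorial j : ℕ)) : ℝ) : ℂ) *
            ((2 * (π : ℂ)) ^ n)⁻¹ *
              ∫ t : Fin n → ℝ,
                ShatP n p t * (∏ l, (zeta (ε * t l) : ℂ)) * vdm (sigC n t) *
                  (Matrix.of fun b c : Fin n =>
                    cpw (a c)
                      (-Complex.I * (t b : ℂ) - 2 * (n : ℂ) + 2 * ((b : ℕ) + 1 : ℂ) - 1)).det)
        (𝓝[>] (0 : ℝ)) (𝓝 ((p a : ℝ) : ℂ)) := by
  obtain ⟨k, rfl⟩ := Nat.exists_eq_add_of_le' hn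
  obtain rfl := eq_cosTransform_cosPowBump hzc hzeq
  filter_upwards [ae_injective, ae_isLebesguePoint (isOpen_posOrthant (k + 1)) hpInt]
    with a hinj hleb ha
  have hvdm := vdm_sq_ne_zero hinj ha
  have hinv := tendsto_expDet_inversion (isBumpProfile_cosPowBump (by omega)) hn
    (fun _ => integrable_pow_mul_cosTransform_cosPowBump) vdm_evenExponent_ne_zero
    (aestronglyMeasurable_div_vdm_sq hpInt.aestronglyMeasurable)
    (integrableOn_div_vdm_sq_mul_norm_expDet hpInt) (div_vdm_sq_antisymm hpSym) ha
    ((hleb ha).div_vdm_sq hvdm)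
  have hfact : ((k + 1).factorial : ℂ) ≠ 0 := mod_cast (k + 1).factorial_ne_zero
  have hconst : ((∏ j ∈ Finset.range (k + 1), 2 ^ j * Nat.factorial j : ℕ) : ℂ) ≠ 0 :=
    mod_cast Finset.prod_ne_zero_iff.2 fun j _ => by positivity
  have hscaled := hinv.const_mul
    (((vdm fun j => a j ^ 2) / ((k + 1).factorial : ℝ) ^ 2 : ℝ) : ℂ)
  convert! hscaled using 2 with ε
  · rw [integral_ShatP_inversion p _ ε ha]
    push_cast at hconst ⊢
    field_simp
  · norm_cast
    field_simp

end
end
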